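/- arXiv:1407.5255 — 4 statements merged into one kernel-verified Lean document; each statement's English description precedes it below -/
import Mathlib

section
/- No two non-isomorphic dumbbell graphs are L-cospectral: if p ≥ q ≥ 3, k ≥ 0, p' ≥ q' ≥ 3, k' ≥ 0 and the Laplacian matrices of the dumbbell graphs D_{p,k,q} and D_{p',k',q'} have equal characteristic polynomials, then (p, q, k) = (p', q', k'), and hence D_{p,k,q} and D_{p',k',q'} are isomorphic. -/
/-!
Write `n = p + q + k`. Substituting `x = 2 - t - t⁻¹` with `t > 1` turns `xI - L` into
`-M`, where `M` has `y = t + t⁻¹` at the vertices of degree two, `y + 1` at the two vertices of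
degree three, and `-1` at adjacent pairs. Deleting the two vertices of degree three leaves three
paths with `p - 1`, `q - 1` and `k` vertices. On a path the equation `M z = 0` is the recurrence
`y f (m + 1) = f m + f (m + 2)`, solved by combinations of `t ^ m` and `t ^ (-m)`; so the
Schur complement of the path blocks is an explicit `2 × 2` matrix (`schur_eq`), and the path
blocks have determinant `(t ^ (m + 1) - t ^ (-m - 1)) / (t - t⁻¹)` (`det_pathMat`). Together
these give (`det_closed`)
`det M * t ^ (n + 3) * (t - t⁻¹) ^ 3 = (t - 1) ^ 2 * G(t)`, with
`G = (X^p - 1)(X^q - 1)[X^(2k+2)((X+2)X^p - X)((X+2)X^q - X) - (X^p - 2X - 1)(X^q - 2X - 1)]`.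
Hence the Laplacian characteristic polynomial determines `n` (its degree) and `G` (`gPoly`).

It remains to recover `p, q, k` from `n` and `G`.
* At `X = 1` the bracket vanishes with derivative `8n`, so the leading coefficient of `G` there
  is `8npq`; thus `pq` is determined (`gPoly_mul_eq`).
* At `X = 0`, the lowest-order terms of `G + (2X + 1)^2` are `2X^q` and `X^(2k+4)` if `q < p`.
  Suppose `q < q'`. As `pq = p'q'` and `n = n'`, this forces `q < q' ≤ p' < p` and `k < k'`.
  So modulo `X^(min(q, 2k+4) + 1)` the polynomial `G + (2X + 1)^2` is a nonzero monomial with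
  coefficient 2, 1 or 3, while its primed counterpart is zero: a contradiction
  (`gPoly_inj`). By symmetry `q = q'`, then `p = p'`, then `k = k'`.
-/

open Polynomial Matrix SimpleGraph
open scoped Classical

/-- The matrix `U_n`: tridiagonal, 2 on the diagonal, -1 on the sub/super-diagonal. -/
def Umatrix (R : Type*) [Ring R] (n : ℕ) : Matrix (Fin n) (Fin n) R :=
  Matrix.of fun i j =>
    if (i : ℕ) = (j : ℕ) then 2
    else if (i : ℕ) + 1 = (j : ℕ) ∨ (j : ℕ) + 1 = (i : ℕ) then -1 else 0

/-- Auxiliary relation for the dumbbell graph `D_{p,k,q}` on vertices `0,…,p+q+k-1`: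
vertices `0,…,p-1` form the cycle `C_p`, vertices `p,…,p+q-1` form the cycle `C_q`, and
vertices `p+q,…,p+q+k-1` are the internal vertices of the connecting path (in order),
with vertex `0` of `C_p` and vertex `p` of `C_q` being its endpoints. -/
def dumbbellRel (p k q : ℕ) (a b : ℕ) : Prop :=
  (b = a + 1 ∧ b < p) ∨
  (a = 0 ∧ b = p - 1) ∨
  (p ≤ a ∧ b = a + 1 ∧ b < p + q) ∨
  (a = p ∧ b = p + q - 1) ∨
  (p + q ≤ a ∧ b = a + 1 ∧ b < p + q + k) ∨
  (if k = 0 then a = 0 ∧ b = p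
   else (a = 0 ∧ b = p + q) ∨ (a = p ∧ b = p + q + k - 1))

/-- The dumbbell graph `D_{p,k,q}` on `p + q + k` vertices. -/
def dumbbellGraph (p k q : ℕ) : SimpleGraph (Fin (p + q + k)) :=
  SimpleGraph.fromRel (fun a b => dumbbellRel p k q (a : ℕ) (b : ℕ))

/-- One path of a theta graph: endpoints `0` and `v`, with `m` internal vertices
`L, L+1, …, L+m-1` (in order); if `m = 0` the path is the single edge `0v`. -/
def thetaBlockRel (v L m : ℕ) (a b : ℕ) : Prop :=
  if m = 0 then a = 0 ∧ b = v
  else (a = 0 ∧ b = L) ∨ (L ≤ a ∧ b = a + 1 ∧ b < L + m) ∨ (a = L + m - 1 ∧ b = v)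

/-- The theta graph `Θ_{r,s,t}` on `r + s + t + 2` vertices: the degree-3 vertices are
`u = 0` and `v = r+s+t+1`, joined by three internally disjoint paths with `r`, `s`, `t`
internal vertices respectively. -/
def thetaGraph (r s t : ℕ) : SimpleGraph (Fin (r + s + t + 2)) :=
  SimpleGraph.fromRel (fun a b =>
    thetaBlockRel (r + s + t + 1) 1 r (a : ℕ) (b : ℕ) ∨
    thetaBlockRel (r + s + t + 1) (r + 1) s (a : ℕ) (b : ℕ) ∨
    thetaBlockRel (r + s + t + 1) (r + s + 1) t (a : ℕ) (b : ℕ))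

/-- The matrix `L_{q,k}`: the principal submatrix of the Laplacian matrix of a dumbbell
graph `D_{p,k,q}` obtained by deleting the rows and columns of the `p` vertices of `C_p`.
Indices `0,…,k-1` are the path vertices `u_1,…,u_k` and indices `k,…,k+q-1` are the cycle
vertices `w_1,…,w_q`. -/
def dumbbellMinor (R : Type*) [Ring R] (q k : ℕ) : Matrix (Fin (q + k)) (Fin (q + k)) R :=
  Matrix.of fun a b =>
    if (a : ℕ) = (b : ℕ) then (if (a : ℕ) = k then 3 else 2)
    else if (a : ℕ) + 1 = (b : ℕ) ∨ (b : ℕ) + 1 = (a : ℕ) ∨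
            ((a : ℕ) = k ∧ (b : ℕ) = k + q - 1) ∨ ((a : ℕ) = k + q - 1 ∧ (b : ℕ) = k)
    then -1 else 0

/-- The matrix `θ_{r,s,t}`: the principal submatrix of the Laplacian matrix of the theta
graph `Θ_{r,s,t}` obtained by deleting the row and column of the degree-3 vertex `u = 0`. -/
noncomputable def thetaMinor (r s t : ℕ) :
    Matrix (Fin (r + s + t + 1)) (Fin (r + s + t + 1)) ℚ :=
  ((thetaGraph r s t).lapMatrix ℚ).submatrix (fun i => i.succ) (fun i => i.succ)

/-- The number of spanning trees of a graph. -/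
noncomputable def spanningTreeCount {V : Type*} (G : SimpleGraph V) : ℕ :=
  Nat.card {H : G.Subgraph // H.verts = Set.univ ∧ H.coe.IsTree}

/-! ### Paths -/

/-- The block of `M` on a path with `n` vertices all of degree two: `y` on the diagonal and `-1`
beside it. -/
def pathMat (y : ℚ) (n : ℕ) : Matrix (Fin n) (Fin n) ℚ :=
  Matrix.of fun i j =>
    if (i : ℕ) = (j : ℕ) then y
    else if (i : ℕ) + 1 = (j : ℕ) ∨ (j : ℕ) + 1 = (i : ℕ) then -1 else 0

lemma det_pathMat_rec (y : ℚ) (n : ℕ) :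
    (pathMat y (n + 2)).det = y * (pathMat y (n + 1)).det - (pathMat y n).det := by
  have hsub : (pathMat y (n + 2)).submatrix Fin.succ Fin.succ = pathMat y (n + 1) := by
    ext i j; simp [pathMat]
  have hminor : ((pathMat y (n + 2)).submatrix Fin.succ (Fin.succAbove 1)).det
      = -(pathMat y n).det := by
    rw [Matrix.det_succ_column_zero, Fin.sum_univ_succ, Finset.sum_eq_zero]
    · have : ((pathMat y (n + 2)).submatrix Fin.succ (Fin.succAbove 1)).submatrix
          (Fin.succAbove 0) Fin.succ = pathMat y n := by
        ext i j
        simp [pathMat, Fin.succAbove, Fin.lt_def]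
      rw [this]
      simp [pathMat, Fin.succAbove]
    · intro i _
      simp [pathMat, Fin.succAbove]
  rw [Matrix.det_succ_row_zero, Fin.sum_univ_succ, Fin.sum_univ_succ, Finset.sum_eq_zero]
  · simp only [Fin.succ_zero_eq_one, hminor, Fin.succAbove_zero, hsub]
    simp [pathMat]
    ring
  · intro i _
    simp [pathMat]

/-- `t ^ m - t ^ (-m)`, that is `2 sinh (m log t)`. -/
def geo (t : ℚ) (m : ℕ) : ℚ := t ^ m - (t ^ m)⁻¹

lemma geo_pos {t : ℚ} (ht : 1 < t) (m : ℕ) : 0 < geo t (m + 1) := by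
  have h1 : 1 < t ^ (m + 1) := one_lt_pow₀ ht (by omega)
  have h2 : (t ^ (m + 1))⁻¹ < 1 := inv_lt_one_of_one_lt₀ h1
  unfold geo; linarith

/-- `geo t` solves the path recurrence with parameter `t + t⁻¹`. -/
lemma geo_rec {t : ℚ} (ht : 1 < t) (m : ℕ) :
    geo t (m + 2) = (t + t⁻¹) * geo t (m + 1) - geo t m := by
  have : t ≠ 0 := by positivity
  unfold geo; field_simp; ring

lemma det_pathMat {t : ℚ} (ht : 1 < t) (n : ℕ) :
    (pathMat (t + t⁻¹) n).det = geo t (n + 1) / geo t 1 := by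
  have h1 := (geo_pos ht 0).ne'
  induction n using Nat.twoStepInduction with
  | zero => simp at h1 ⊢; rw [div_self h1]
  | one =>
    have := geo_rec ht 0
    rw [this]
    simp [pathMat, geo] at h1 ⊢
    rw [mul_div_cancel_right₀ _ h1]
  | more n h0 h2 =>
    rw [det_pathMat_rec, h0, h2, geo_rec ht (n + 1)]; field_simp

/-! ### Recovering the parameters from `G` -/

/-- The polynomial `G` attached to `D_{p,k,q}`: up to factors depending only on `t` and the
number of vertices, its value at `t` is the Laplacian characteristic polynomial at `2 - t - t⁻¹`. -/
noncomputable def gPoly (p q k : ℕ) : ℚ[X] :=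
  (X ^ p - 1) * (X ^ q - 1) *
    (X ^ (2 * k) * X ^ 2 * ((X + 2) * X ^ p - X) * ((X + 2) * X ^ q - X)
      - (X ^ p - 2 * X - 1) * (X ^ q - 2 * X - 1))

/-- `G = (X - 1) ^ 2 * (S p * S q * B)` with `S p = 1 + ⋯ + X ^ (p - 1)`. Since `B` vanishes at `1`
with derivative `8 (p + q + k)`, differentiating the last factor at `1` gives `8 (p + q + k) p q`. -/
lemma gPoly_mul_eq {p q k p' q' k' : ℕ} (hn : p + q + k = p' + q' + k') (hp : 0 < p)
    (h : gPoly p q k = gPoly p' q' k') : p * q = p' * q' := by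
  have hX : (X - 1 : ℚ[X]) ≠ 0 := X_sub_C_ne_zero 1
  let B : ℕ → ℕ → ℕ → ℚ[X] := fun p q k =>
    X ^ (2 * k) * X ^ 2 * ((X + 2) * X ^ p - X) * ((X + 2) * X ^ q - X)
      - (X ^ p - 2 * X - 1) * (X ^ q - 2 * X - 1)
  let S : ℕ → ℚ[X] := fun p => ∑ i ∈ Finset.range p, X ^ i
  have key : ∀ p q k, gPoly p q k = (X - 1) ^ 2 * (S p * S q * B p q k) := by
    intro p q k
    simp only [gPoly, ← geom_sum_mul, S, B]; ring
  rw [key, key] at h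
  have h2 := mul_left_cancel₀ (pow_ne_zero 2 hX) h
  have hB : ∀ p q k, (B p q k).eval 1 = 0 := by intro p q k; simp [B]
  have hB' : ∀ p q k, (derivative (B p q k)).eval 1 = 8 * (p + q + k : ℚ) := by
    intro p q k; simp [B, derivative_X_pow]; ring
  have hS : ∀ p, (S p).eval 1 = p := by intro p; simp [S, eval_finsetSum]
  have h3 := congrArg (fun f => (derivative f).eval 1) h2
  simp only [derivative_mul, eval_add, eval_mul, hB, hB', hS, mul_zero, zero_add] at h3
  have hn' : (p + q + k : ℚ) = p' + q' + k' := by exact_mod_cast hn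
  rw [← hn'] at h3
  have : (p + q + k : ℚ) ≠ 0 := by positivity
  have h4 : (p * q : ℚ) = p' * q' := by
    have : (8 * (p + q + k : ℚ)) ≠ 0 := by positivity
    exact mul_right_cancel₀ this h3
  exact_mod_cast h4

/-- If `X ^ m` divides `X ^ q` and `X ^ (2 * k + 4)`, and `X ^ (m + 1)` divides `X ^ p`, then
`G ≡ -(2 * X + 1) ^ 2 + 2 * X ^ q + X ^ (2 * k + 4)` modulo `X ^ (m + 1)`. The cofactors
`A`, `B`, `D` keep the exponents free of truncated subtraction. -/
lemma gPoly_low {p q k : ℕ} {m : ℕ} (A B D : ℚ[X]) (hm : 0 < m) (hQ : X ^ q = X ^ m * A)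
    (hP : X ^ p = X ^ m * X * D) (hK : X ^ (2 * k) * X ^ 4 = X ^ m * B) :
    ∃ R : ℚ[X], gPoly p q k + (2 * X + 1) ^ 2 = X ^ m * R ∧ R.eval 0 = 2 * A.eval 0 + B.eval 0 := by
  set J : ℚ[X] := X ^ (2 * k)
  set Y : ℚ[X] := X ^ m with hY
  let c : ℚ[X] := 2 * X + 1
  let S := X * D + A
  let R₁ := -X * (X + 2) * S + (X + 2) ^ 2 * (X * D) * (Y * A)
  let T := J * X ^ 4 + J * X ^ 2 * (Y * R₁) + c * (Y * S) - Y * X * D * (Y * A)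
  refine ⟨S * (c + c ^ 2) + B + J * X ^ 2 * R₁ - X * D * (Y * A) * (1 + c ^ 2) - S * T
    + X * D * (Y * A) * T, ?_, ?_⟩
  · rw [gPoly, hP, hQ]
    simp only [T, R₁, S, c]
    linear_combination hK
  · simp [T, R₁, S, c, hY, hm.ne']
    ring

/-- If the two polynomials `G` agree and all of `q', p', 2 * k' + 4` exceed `m`, the
coefficient of `X ^ m` in `G + (2 * X + 1) ^ 2` as computed from `p, q, k` must vanish. -/
lemma gPoly_low_eq {p q k p' q' k' : ℕ} (h : gPoly p q k = gPoly p' q' k') {m : ℕ}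
    {A B D A' B' D' : ℚ[X]} (hm : 0 < m) (hQ : X ^ q = X ^ m * A) (hP : X ^ p = X ^ m * X * D)
    (hK : X ^ (2 * k) * X ^ 4 = X ^ m * B)
    (hQ' : X ^ q' = X ^ m * X * A') (hP' : X ^ p' = X ^ m * X * D')
    (hK' : X ^ (2 * k') * X ^ 4 = X ^ m * X * B') : 2 * A.eval 0 + B.eval 0 = 0 := by
  obtain ⟨R, hR, hR0⟩ := gPoly_low A B D hm hQ hP hK
  obtain ⟨R', hR', hR0'⟩ := gPoly_low (X * A') (X * B') D' hm (hQ'.trans (mul_assoc ..)) hP'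
    (hK'.trans (mul_assoc ..))
  rw [h, hR'] at hR
  rw [← hR0, ← mul_left_cancel₀ (pow_ne_zero m X_ne_zero) hR, hR0']
  simp

/-- Applied in both directions this recovers `q` from `G` and the number of vertices. -/
lemma gPoly_inj {p q k p' q' k' : ℕ} (hq : 3 ≤ q) (hqp : q ≤ p) (hqp' : q' ≤ p')
    (hn : p + q + k = p' + q' + k') (h : gPoly p q k = gPoly p' q' k') : q' ≤ q := by
  by_contra! hlt
  have hm := gPoly_mul_eq hn (by omega) h
  have hp : p' < p := by
    by_contra! hle
    nlinarith
  -- for a fixed product, the sum grows as the factors move apart; hence also `k < k'` below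
  have hs : p' + q' < p + q := by
    zify at *
    nlinarith [mul_pos (show (0 : ℤ) < p - q' by linarith) (show (0 : ℤ) < q' - q by linarith)]
  have spl : ∀ a b : ℕ, a ≤ b → (X ^ b : ℚ[X]) = X ^ a * X ^ (b - a) := fun a b hab => by
    rw [← pow_add]; congr 1; omega
  have spl1 : ∀ a b : ℕ, a < b → (X ^ b : ℚ[X]) = X ^ a * X * X ^ (b - a - 1) := fun a b hab => by
    rw [← pow_succ, ← pow_add]; congr 1; omega
  set m := min q (2 * k + 4) with hmdef
  have := gPoly_low_eq h (m := m) (by omega) (spl m q (by omega)) (spl1 m p (by omega))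
    ((pow_add _ _ _).symm.trans (spl m (2 * k + 4) (by omega))) (spl1 m q' (by omega))
    (spl1 m p' (by omega)) ((pow_add _ _ _).symm.trans (spl1 m (2 * k' + 4) (by omega)))
  simp only [eval_pow, eval_X] at this
  -- the powers of `0` are `1` or `0` according to whether the exponent of that term is `m`
  rcases min_choice q (2 * k + 4) with h1 | h1
  · have e : q - m = 0 := by omega
    have h0 : (0 : ℚ) ≤ 0 ^ (2 * k + 4 - m) := by positivity
    rw [e, pow_zero] at this; linarith
  · have e : 2 * k + 4 - m = 0 := by omega
    have h0 : (0 : ℚ) ≤ 0 ^ (q - m) := by positivity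
    rw [e, pow_zero] at this; linarith

/-! ### The Laplacian matrix of a dumbbell graph -/

lemma degree_eq_two {V : Type*} [Fintype V] {G : SimpleGraph V} [DecidableRel G.Adj] {v : V}
    (a b : V) (hab : a ≠ b) (h : ∀ w, G.Adj v w ↔ w = a ∨ w = b) : G.degree v = 2 := by
  rw [← card_neighborFinset_eq_degree, ← Finset.card_pair hab]
  congr 1
  ext w; simp [h]

lemma degree_eq_three {V : Type*} [Fintype V] {G : SimpleGraph V} [DecidableRel G.Adj] {v : V}
    (a b c : V) (hab : a ≠ b) (hac : a ≠ c) (hbc : b ≠ c)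
    (h : ∀ w, G.Adj v w ↔ w = a ∨ w = b ∨ w = c) : G.degree v = 3 := by
  rw [← card_neighborFinset_eq_degree, ← Finset.card_eq_three.2 ⟨a, b, c, hab, hac, hbc, rfl⟩]
  congr 1
  ext w; simp [h]

set_option maxHeartbeats 1000000 in
lemma dumbbell_degree (p k q : ℕ) (hp : 3 ≤ p) (hq : 3 ≤ q) (v : Fin (p + q + k)) :
    (dumbbellGraph p k q).degree v = if (v : ℕ) = 0 ∨ (v : ℕ) = p then 3 else 2 := by
  obtain ⟨v, hv⟩ := v
  simp only
  by_cases h0 : v = 0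
  · subst h0
    rw [if_pos (by simp)]
    refine degree_eq_three ⟨1, by omega⟩ ⟨p - 1, by omega⟩
      ⟨if k = 0 then p else p + q, by split_ifs <;> omega⟩ ?_ ?_ ?_ ?_
    · grind
    · grind
    · grind
    · rintro ⟨w, hw⟩
      simp only [dumbbellGraph, SimpleGraph.fromRel_adj, dumbbellRel, Fin.ext_iff, ne_eq]
      grind
  by_cases hvp : v = p
  · subst hvp
    rw [if_pos (by simp)]
    refine degree_eq_three ⟨v + 1, by omega⟩ ⟨v + q - 1, by omega⟩
      ⟨if k = 0 then 0 else v + q + k - 1, by split_ifs <;> omega⟩ ?_ ?_ ?_ ?_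
    · grind
    · grind
    · grind
    · rintro ⟨w, hw⟩
      simp only [dumbbellGraph, SimpleGraph.fromRel_adj, dumbbellRel, Fin.ext_iff, ne_eq]
      grind
  rw [if_neg (by omega)]
  rcases lt_or_ge v p with hlt | hge
  · refine degree_eq_two ⟨v - 1, by omega⟩
      ⟨if v = p - 1 then 0 else v + 1, by split_ifs <;> omega⟩ ?_ ?_
    · grind
    · rintro ⟨w, hw⟩
      simp only [dumbbellGraph, SimpleGraph.fromRel_adj, dumbbellRel, Fin.ext_iff, ne_eq]
      grind
  rcases lt_or_ge v (p + q) with hlt | hge'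
  · refine degree_eq_two ⟨v - 1, by omega⟩
      ⟨if v = p + q - 1 then p else v + 1, by split_ifs <;> omega⟩ ?_ ?_
    · grind
    · rintro ⟨w, hw⟩
      simp only [dumbbellGraph, SimpleGraph.fromRel_adj, dumbbellRel, Fin.ext_iff, ne_eq]
      grind
  · refine degree_eq_two ⟨if v = p + q then 0 else v - 1, by split_ifs <;> omega⟩
      ⟨if v = p + q + k - 1 then p else v + 1, by split_ifs <;> omega⟩ ?_ ?_
    · grind
    · rintro ⟨w, hw⟩
      simp only [dumbbellGraph, SimpleGraph.fromRel_adj, dumbbellRel, Fin.ext_iff, ne_eq]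
      grind

/-- The entries of `M = (y - 2) I + L`, for the Laplacian matrix `L` of `D_{p,k,q}` and `p, q ≥ 3`. -/
noncomputable def dEntry (y : ℚ) (p k q i j : ℕ) : ℚ :=
  if i = j then (if i = 0 ∨ i = p then y + 1 else y)
  else if dumbbellRel p k q i j ∨ dumbbellRel p k q j i then -1 else 0

lemma scalar_sub_lap (y : ℚ) (p k q : ℕ) (hp : 3 ≤ p) (hq : 3 ≤ q) :
    Matrix.scalar _ (2 - y) - (dumbbellGraph p k q).lapMatrix ℚ =
      -Matrix.of fun i j : Fin (p + q + k) => dEntry y p k q i j := by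
  ext i j
  by_cases hij : i = j
  · subst hij
    simp [lapMatrix, degMatrix, dumbbell_degree p k q hp hq, dEntry]
    split_ifs <;> ring
  · have : (i : ℕ) ≠ j := fun h => hij (Fin.ext h)
    rw [Matrix.sub_apply, lapMatrix, Matrix.sub_apply, adjMatrix_apply]
    simp [degMatrix, dEntry, hij, this, dumbbellGraph]
    split_ifs <;> simp

/-- The vertices of `D_{a+1,k,b+1}` regrouped: the two vertices of degree three, then the rest of
`C_{a+1}`, the rest of `C_{b+1}`, and the interior of the connecting path. -/
abbrev Cut (a b k : ℕ) := Fin 2 ⊕ (Fin a ⊕ (Fin b ⊕ Fin k))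

/-- The vertex number of an element of `Cut`; within each path the vertices appear in order. -/
def cutVal (a b k : ℕ) : Cut a b k → ℕ
  | .inl i => if (i : ℕ) = 0 then 0 else a + 1
  | .inr (.inl i) => i + 1
  | .inr (.inr (.inl i)) => a + 1 + (i + 1)
  | .inr (.inr (.inr i)) => a + 1 + (b + 1) + i

lemma cutVal_lt (a b k : ℕ) (x : Cut a b k) : cutVal a b k x < a + 1 + (b + 1) + k := by
  rcases x with i | i | i | i <;> simp only [cutVal] <;> (try split_ifs) <;> omega

/-- `cutVal` as a bijection onto the vertex set. -/
noncomputable def cutEquiv (a b k : ℕ) : Cut a b k ≃ Fin (a + 1 + (b + 1) + k) :=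
  Equiv.ofBijective (fun x => ⟨cutVal a b k x, cutVal_lt a b k x⟩) <| by
    rw [Fintype.bijective_iff_injective_and_card]
    refine ⟨?_, by simp; omega⟩
    intro x y h
    simp only [Fin.mk.injEq] at h
    rcases x with i | i | i | i <;> rcases y with j | j | j | j <;> simp only [cutVal] at h <;>
      simp only [Sum.inl.injEq, Sum.inr.injEq, reduceCtorEq] <;>
      (try split_ifs at h) <;> omega

/-- The block of `M` between the two vertices of degree three and the three paths: each of these
vertices is joined to both ends of its own cycle path and to one end of the connecting path. -/
noncomputable def blkB (a b k : ℕ) : Matrix (Fin 2) (Fin a ⊕ (Fin b ⊕ Fin k)) ℚ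
  | i, .inl j => if (i : ℕ) = 0 ∧ ((j : ℕ) = 0 ∨ (j : ℕ) + 1 = a) then -1 else 0
  | i, .inr (.inl j) => if (i : ℕ) = 1 ∧ ((j : ℕ) = 0 ∨ (j : ℕ) + 1 = b) then -1 else 0
  | i, .inr (.inr j) =>
    if ((i : ℕ) = 0 ∧ (j : ℕ) = 0) ∨ ((i : ℕ) = 1 ∧ (j : ℕ) + 1 = k) then -1 else 0

/-- The block of `M` on the two vertices of degree three, which are adjacent exactly when `k = 0`. -/
noncomputable def blkA (y : ℚ) (k : ℕ) : Matrix (Fin 2) (Fin 2) ℚ :=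
  Matrix.of fun i j => if (i : ℕ) = (j : ℕ) then y + 1 else if k = 0 then -1 else 0

/-- The block of `M` on the three paths, which are pairwise nonadjacent. -/
noncomputable def blkD (y : ℚ) (a b k : ℕ) :
    Matrix (Fin a ⊕ (Fin b ⊕ Fin k)) (Fin a ⊕ (Fin b ⊕ Fin k)) ℚ :=
  fromBlocks (pathMat y a) 0 0 (fromBlocks (pathMat y b) 0 0 (pathMat y k))

set_option maxHeartbeats 2000000 in
lemma dEntry_blocks (y : ℚ) (a b k : ℕ) (hb : 2 ≤ b) :
    (Matrix.of fun i j : Fin (a + 1 + (b + 1) + k) => dEntry y (a + 1) k (b + 1) i j).submatrix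
      (cutEquiv a b k) (cutEquiv a b k) =
    fromBlocks (blkA y k) (blkB a b k) (blkB a b k)ᵀ (blkD y a b k) := by
  ext i j
  simp only [Matrix.submatrix_apply, Matrix.of_apply, cutEquiv, Equiv.ofBijective_apply]
  rcases i with i | i | i | i <;> rcases j with j | j | j | j <;>
    (try fin_cases i) <;> (try fin_cases j) <;>
    simp [cutVal, dEntry, dumbbellRel, blkA, blkB, blkD, pathMat, fromBlocks_apply₁₁,
      fromBlocks_apply₁₂, fromBlocks_apply₂₁, fromBlocks_apply₂₂, Matrix.zero_apply,
      Matrix.of_apply, Matrix.transpose_apply] <;>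
    grind

/-! ### Solving the recurrence along the paths -/

/-- A solution `f` of the path recurrence, restricted to `1, …, n`, is sent by `pathMat` to its
boundary values `f 0` and `f (n + 1)` at the two ends. -/
lemma pathMat_sum (y : ℚ) (n : ℕ) (f : ℕ → ℚ) (hf : ∀ m, y * f (m + 1) = f m + f (m + 2))
    (i : Fin n) : ∑ j : Fin n, pathMat y n i j * f (j + 1) =
      (if (i : ℕ) = 0 then f 0 else 0) + if (i : ℕ) + 1 = n then f (n + 1) else 0 := by
  obtain ⟨i, hi⟩ := i
  have h1 : ∀ j : Fin n, pathMat y n ⟨i, hi⟩ j * f (j + 1) =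
      (if i = (j : ℕ) then y * f (j + 1) else 0) - (if i + 1 = (j : ℕ) then f (j + 1) else 0)
        - if (j : ℕ) + 1 = i then f (j + 1) else 0 := by
    intro j
    simp only [pathMat, Matrix.of_apply]
    split_ifs <;> first | omega | ring
  simp only [h1, Finset.sum_sub_distrib]
  rw [Finset.sum_range (fun j => if i = j then y * f (j + 1) else 0) |>.symm,
    Finset.sum_range (fun j => if i + 1 = j then f (j + 1) else 0) |>.symm,
    Finset.sum_range (fun j => if j + 1 = i then f (j + 1) else 0) |>.symm]
  rw [Finset.sum_ite_eq, Finset.sum_ite_eq, if_pos (Finset.mem_range.2 hi)]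
  have h3 : ∑ j ∈ Finset.range n, (if j + 1 = i then f (j + 1) else 0) = if i = 0 then 0 else f i := by
    rcases i with _ | i
    · simp
    · simp only [Nat.add_right_cancel_iff, Nat.add_eq_zero_iff, one_ne_zero, and_false, if_false]
      rw [Finset.sum_ite_eq', if_pos (Finset.mem_range.2 (by omega))]
  have := hf i
  simp only [h3, Finset.mem_range]
  split_ifs <;> first | omega | (subst_vars; linarith)

/-- The hypothesis makes the formula persist for the empty path, as needed when `k = 0`. -/
lemma sum_first (n : ℕ) (f : ℕ → ℚ) (h : n = 0 → f 1 = 0) :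
    ∑ j : Fin n, (if (j : ℕ) = 0 then (-1 : ℚ) else 0) * f (j + 1) = -f 1 := by
  rcases n with _ | n
  · simp [h]
  · simp

/-- The hypothesis makes the formula persist for the empty path, as needed when `k = 0`. -/
lemma sum_last (n : ℕ) (f : ℕ → ℚ) (h : n = 0 → f 0 = 0) :
    ∑ j : Fin n, (if (j : ℕ) + 1 = n then (-1 : ℚ) else 0) * f (j + 1) = -f n := by
  rcases n with _ | n
  · simp [h]
  · rw [Fin.sum_univ_castSucc, Finset.sum_eq_zero]
    · simp
    · intro i _
      have : (i : ℕ) ≠ n := by omega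
      simp [this]

lemma sum_both (n : ℕ) (hn : 2 ≤ n) (f : ℕ → ℚ) :
    ∑ j : Fin n, (if (j : ℕ) = 0 ∨ (j : ℕ) + 1 = n then (-1 : ℚ) else 0) * f (j + 1) =
      -f 1 - f n := by
  rw [sub_eq_add_neg, ← sum_first n f (by omega), ← sum_last n f (by omega),
    ← Finset.sum_add_distrib]
  refine Finset.sum_congr rfl fun j _ => ?_
  split_ifs <;> first | omega | ring

/-- The solution of the path recurrence with value `1` at both `0` and `n`. -/
def cycSol (t : ℚ) (n m : ℕ) : ℚ := (t ^ m + t ^ n * (t ^ m)⁻¹) / (1 + t ^ n)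

/-- The solution of the path recurrence with value `1` at `0` and `0` at `n`, for `n > 0`. -/
def pathSol₀ (t : ℚ) (n m : ℕ) : ℚ := (t ^ n * (t ^ m)⁻¹ - (t ^ n)⁻¹ * t ^ m) / geo t n

/-- The solution of the path recurrence with value `0` at `0` and `1` at `n`, for `n > 0`. -/
def pathSol₁ (t : ℚ) (n m : ℕ) : ℚ := geo t m / geo t n

lemma cycSol_rec {t : ℚ} (ht : 1 < t) (n m : ℕ) :
    (t + t⁻¹) * cycSol t n (m + 1) = cycSol t n m + cycSol t n (m + 2) := by
  have : t ≠ 0 := by positivity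
  unfold cycSol; field_simp; ring

lemma pathSol₀_rec {t : ℚ} (ht : 1 < t) (n m : ℕ) :
    (t + t⁻¹) * pathSol₀ t n (m + 1) = pathSol₀ t n m + pathSol₀ t n (m + 2) := by
  have : t ≠ 0 := by positivity
  unfold pathSol₀; field_simp; ring

lemma pathSol₁_rec {t : ℚ} (ht : 1 < t) (n m : ℕ) :
    (t + t⁻¹) * pathSol₁ t n (m + 1) = pathSol₁ t n m + pathSol₁ t n (m + 2) := by
  rw [pathSol₁, pathSol₁, pathSol₁, geo_rec ht m]; ring

/-- Column `i` extends the indicator of the `i`-th vertex of degree three to the three paths so that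
`M` annihilates it at every path vertex; that is, `solMat = -D⁻¹ Bᵀ`. -/
def solMat (t : ℚ) (a b k : ℕ) : Matrix (Fin a ⊕ (Fin b ⊕ Fin k)) (Fin 2) ℚ
  | .inl j, i => if (i : ℕ) = 0 then cycSol t (a + 1) (j + 1) else 0
  | .inr (.inl j), i => if (i : ℕ) = 1 then cycSol t (b + 1) (j + 1) else 0
  | .inr (.inr j), i =>
    if (i : ℕ) = 0 then pathSol₀ t (k + 1) (j + 1) else pathSol₁ t (k + 1) (j + 1)

lemma cycSol_ends {t : ℚ} (ht : 1 < t) (n : ℕ) : cycSol t n 0 = 1 ∧ cycSol t n n = 1 := by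
  have h0 : t ^ n ≠ 0 := by positivity
  have h1 : 1 + t ^ n ≠ 0 := by positivity
  constructor <;> unfold cycSol <;> field_simp
  ring

lemma pathSol₀_ends {t : ℚ} (ht : 1 < t) (n : ℕ) :
    pathSol₀ t (n + 1) 0 = 1 ∧ pathSol₀ t (n + 1) (n + 1) = 0 := by
  have h0 : t ^ (n + 1) ≠ 0 := by positivity
  have h1 := (geo_pos ht n).ne'
  constructor
  · rw [pathSol₀, div_eq_one_iff_eq h1]; simp [geo]
  · rw [pathSol₀, mul_inv_cancel₀ h0, inv_mul_cancel₀ h0]; simp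

lemma pathSol₁_ends {t : ℚ} (ht : 1 < t) (n : ℕ) :
    pathSol₁ t (n + 1) 0 = 0 ∧ pathSol₁ t (n + 1) (n + 1) = 1 := by
  have h1 := (geo_pos ht n).ne'
  exact ⟨by simp [pathSol₁, geo], by simp [pathSol₁, h1]⟩

lemma blkD_mul_solMat {t : ℚ} (ht : 1 < t) (a b k : ℕ) (ha : 2 ≤ a) (hb : 2 ≤ b) :
    (blkB a b k)ᵀ + blkD (t + t⁻¹) a b k * solMat t a b k = 0 := by
  have ca := pathMat_sum _ a _ (cycSol_rec ht (a + 1))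
  have cb := pathMat_sum _ b _ (cycSol_rec ht (b + 1))
  have c0 := pathMat_sum _ k _ (pathSol₀_rec ht (k + 1))
  have c1 := pathMat_sum _ k _ (pathSol₁_rec ht (k + 1))
  simp only [cycSol_ends ht] at ca cb
  simp only [pathSol₀_ends ht] at c0
  simp only [pathSol₁_ends ht] at c1
  ext i j
  rcases i with i | i | i <;> fin_cases j <;>
    simp [Matrix.mul_apply, Fintype.sum_sum_type, blkB, blkD, solMat, ca, cb, c0, c1] <;> grind

/-- The Schur complement. For `k = 0` the entry `-1` of `blkA` plays the part of the missing path: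
the boundary values of `pathSol₀` and `pathSol₁` make the same formula hold. -/
lemma schur_eq {t : ℚ} (ht : 1 < t) (a b k : ℕ) (ha : 2 ≤ a) (hb : 2 ≤ b) :
    blkA (t + t⁻¹) k + blkB a b k * solMat t a b k =
      !![t + t⁻¹ + 1 - cycSol t (a + 1) 1 - cycSol t (a + 1) a - pathSol₀ t (k + 1) 1,
        -pathSol₁ t (k + 1) 1; -pathSol₀ t (k + 1) k,
        t + t⁻¹ + 1 - cycSol t (b + 1) 1 - cycSol t (b + 1) b - pathSol₁ t (k + 1) k] := by
  have ca := sum_both a ha (cycSol t (a + 1))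
  have cb := sum_both b hb (cycSol t (b + 1))
  have e0 := pathSol₀_ends ht 0
  have e1 := pathSol₁_ends ht 0
  have h00 := sum_first k (pathSol₀ t (k + 1)) (by rintro rfl; exact e0.2)
  have h11 := sum_last k (pathSol₁ t (k + 1)) (by rintro rfl; exact e1.1)
  have h01 : (if k = 0 then -1 else 0) + ∑ j : Fin k, (if (j : ℕ) = 0 then (-1 : ℚ) else 0) *
      pathSol₁ t (k + 1) (j + 1) = -pathSol₁ t (k + 1) 1 := by
    by_cases hk : k = 0
    · subst hk; simpa using e1.2.symm
    · rw [sum_first _ _ (by omega), if_neg hk, zero_add]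
  have h10 : (if k = 0 then -1 else 0) + ∑ j : Fin k, (if (j : ℕ) + 1 = k then (-1 : ℚ) else 0) *
      pathSol₀ t (k + 1) (j + 1) = -pathSol₀ t (k + 1) k := by
    by_cases hk : k = 0
    · subst hk; simpa using e0.1.symm
    · rw [sum_last _ _ (by omega), if_neg hk, zero_add]
  ext i j
  fin_cases i <;> fin_cases j
  · simp only [Matrix.add_apply, Matrix.mul_apply, Fintype.sum_sum_type, blkB, blkA, solMat]
    simp [-ite_mul, ca, h00]; ring
  · simp only [Matrix.add_apply, Matrix.mul_apply, Fintype.sum_sum_type, blkB, blkA, solMat]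
    simp [-ite_mul, h01]
  · simp only [Matrix.add_apply, Matrix.mul_apply, Fintype.sum_sum_type, blkB, blkA, solMat]
    simp [-ite_mul, h10]
  · simp only [Matrix.add_apply, Matrix.mul_apply, Fintype.sum_sum_type, blkB, blkA, solMat]
    simp [-ite_mul, cb, h11]; ring

/-! ### The determinant in closed form -/

/-- The Schur determinant formula with `Z = -D⁻¹ C` supplied as a solution of `C + D * Z = 0`, so that
`D` need not be inverted. -/
lemma det_schur {m n : Type*} [Fintype m] [Fintype n] [DecidableEq m] [DecidableEq n]
    (A : Matrix m m ℚ) (B : Matrix m n ℚ) (C : Matrix n m ℚ) (D : Matrix n n ℚ) (Z : Matrix n m ℚ)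
    (h : C + D * Z = 0) : (fromBlocks A B C D).det = (A + B * Z).det * D.det := by
  have : fromBlocks A B C D * fromBlocks 1 0 Z 1 = fromBlocks (A + B * Z) B 0 D := by
    simp [fromBlocks_multiply, h]
  have h2 := congrArg Matrix.det this
  rw [det_mul, det_fromBlocks_zero₁₂, det_fromBlocks_zero₂₁] at h2
  simpa using h2

lemma geo_mul_pow {t : ℚ} (ht : 1 < t) (n : ℕ) : geo t n * t ^ n = t ^ n * t ^ n - 1 := by
  have : t ≠ 0 := by positivity
  unfold geo; field_simp

/-- The closed form of `det M` in terms of `G`, cleared of denominators. -/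
lemma det_closed {t : ℚ} (ht : 1 < t) (a b k : ℕ) (ha : 2 ≤ a) (hb : 2 ≤ b) :
    (Matrix.of fun i j : Fin (a + 1 + (b + 1) + k) =>
      dEntry (t + t⁻¹) (a + 1) k (b + 1) i j).det * (t ^ (a + 1 + (b + 1) + k + 3) * geo t 1 ^ 3) =
    (t - 1) ^ 2 * (gPoly (a + 1) (b + 1) k).eval t := by
  rw [← Matrix.det_submatrix_equiv_self (cutEquiv a b k), dEntry_blocks _ _ _ _ hb,
    det_schur _ _ _ _ _ (blkD_mul_solMat ht a b k ha hb), schur_eq ht _ _ _ ha hb, det_fin_two_of, blkD,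
    det_fromBlocks_zero₂₁, det_fromBlocks_zero₂₁, det_pathMat ht, det_pathMat ht, det_pathMat ht]
  have h0 : t ≠ 0 := by positivity
  have hk : t ^ (k + 1) * t ^ (k + 1) - 1 ≠ 0 := by
    rw [← geo_mul_pow ht]; exact mul_ne_zero (geo_pos ht k).ne' (by positivity)
  have h1 : t * t - 1 ≠ 0 := by nlinarith
  have hA : 1 + t ^ (a + 1) ≠ 0 := by positivity
  have hB : 1 + t ^ (b + 1) ≠ 0 := by positivity
  have hg : ∀ n, geo t n = (t ^ n * t ^ n - 1) / t ^ n := by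
    intro n; unfold geo; field_simp
  simp only [gPoly, pathSol₀, pathSol₁, cycSol, hg, pow_succ, pow_zero, one_mul, pow_add, pow_mul] at *
  have htk : (t * t) ^ k = t ^ k * t ^ k := mul_pow t t k
  simp only [htk, eval_mul, eval_sub, eval_add, eval_pow, eval_X, eval_one, eval_ofNat]
  have hP : t ^ a ≠ 0 := by positivity
  have hQ : t ^ b ≠ 0 := by positivity
  have hK : t ^ k ≠ 0 := by positivity
  generalize t ^ a = P at *
  generalize t ^ b = Q at *
  generalize t ^ k = K at *
  -- Everything is now rational in `t` and `P = t ^ a`, `Q = t ^ b`, `K = t ^ k`; the fractions are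
  -- combined one at a time so that the final `ring` sees a polynomial identity.
  have eC : ∀ R : ℚ, R ≠ 0 → 1 + R * t ≠ 0 →
      t + t⁻¹ + 1 - (t + R * t * t⁻¹) / (1 + R * t) - (R + R * t * R⁻¹) / (1 + R * t) =
        ((t * t + t + 1) * (1 + R * t) - 2 * t * (t + R)) / (t * (1 + R * t)) := by
    intro R hR hR'
    rw [mul_assoc R t, mul_inv_cancel₀ h0, mul_right_comm R t, mul_inv_cancel₀ hR]
    generalize hs : 1 + R * t = A at *
    field_simp
    rw [← hs]; ring
  have e1 : (K * t * t⁻¹ - (K * t)⁻¹ * t) / ((K * t * (K * t) - 1) / (K * t)) =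
      (K * K - 1) * t / (K * t * (K * t) - 1) := by field_simp
  have e2 : (K * K - 1) / K / ((K * t * (K * t) - 1) / (K * t)) =
      (K * K - 1) * t / (K * t * (K * t) - 1) := by field_simp
  have e3 : (t * t - 1) / t / ((K * t * (K * t) - 1) / (K * t)) =
      (t * t - 1) * K / (K * t * (K * t) - 1) := by field_simp
  have e4 : (K * t * K⁻¹ - (K * t)⁻¹ * K) / ((K * t * (K * t) - 1) / (K * t)) =
      (t * t - 1) * K / (K * t * (K * t) - 1) := by field_simp
  have e5 : ∀ R : ℚ, R * t * (R * t) - 1 = (R * t - 1) * (1 + R * t) := by intro R; ring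
  have e6 : ((P * t * (P * t) - 1) / (P * t) / ((t * t - 1) / t) *
          ((Q * t * (Q * t) - 1) / (Q * t) / ((t * t - 1) / t) *
            ((K * t * (K * t) - 1) / (K * t) / ((t * t - 1) / t)))) *
      (P * t * (Q * t) * K * t * t * t * ((t * t - 1) / t * ((t * t - 1) / t) * ((t * t - 1) / t)))
      = (P * t - 1) * (1 + P * t) * ((Q * t - 1) * (1 + Q * t)) * (K * t * (K * t) - 1) * (t * t) := by
    rw [e5 P, e5 Q]
    generalize K * t * (K * t) - 1 = W at *
    generalize t * t - 1 = s at *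
    field_simp
  rw [eC P hP hA, eC Q hQ hB, e1, e2, e3, e4, mul_assoc, e6]
  -- cancels the factors of `A`, `B` and one of the two factors `W`; the other one is cleared below
  have e7 : ∀ N₁ N₂ A B W M S x y : ℚ, A ≠ 0 → B ≠ 0 → W ≠ 0 →
      ((N₁ / (t * A) - M * t / W) * (N₂ / (t * B) - M * t / W) - -(S * K / W) * -(S * K / W)) *
        (x * A * (y * B) * W * (t * t)) =
      x * y * ((N₁ * W - M * t * t * A) * (N₂ * W - M * t * t * B) -
        S * S * K * K * t * t * A * B) / W := by
    intro N₁ N₂ A B W M S x y hA hB hW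
    field_simp
  rw [e7 _ _ _ _ _ _ _ _ _ hA hB hk, div_eq_iff hk]
  ring

/-- The Laplacian characteristic polynomial determines the number of vertices and `G`: the two
polynomials `G` agree at every rational `t > 1`. -/
lemma gPoly_eq_of_charpoly_eq {p q k p' q' k' : ℕ}
    (hp : 3 ≤ p) (hq : 3 ≤ q) (hp' : 3 ≤ p') (hq' : 3 ≤ q')
    (h : ((dumbbellGraph p k q).lapMatrix ℚ).charpoly =
      ((dumbbellGraph p' k' q').lapMatrix ℚ).charpoly) :
    p + q + k = p' + q' + k' ∧ gPoly p q k = gPoly p' q' k' := by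
  have hn : p + q + k = p' + q' + k' := by
    simpa [Matrix.charpoly_natDegree_eq_dim] using congrArg natDegree h
  refine ⟨hn, eq_of_infinite_eval_eq _ _ ((Set.Ioi_infinite (1 : ℚ)).mono fun t ht => ?_)⟩
  have ht : 1 < t := ht
  have h1 := congrArg (Polynomial.eval (2 - (t + t⁻¹))) h
  rw [Matrix.eval_charpoly, Matrix.eval_charpoly, scalar_sub_lap _ _ _ _ hp hq,
    scalar_sub_lap _ _ _ _ hp' hq', Matrix.det_neg, Matrix.det_neg, Fintype.card_fin,
    Fintype.card_fin, show ((-1 : ℚ) ^ (p + q + k)) = (-1) ^ (p' + q' + k') by rw [hn]] at h1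
  have h2 := mul_left_cancel₀ (pow_ne_zero _ (by norm_num)) h1
  obtain ⟨a, rfl⟩ : ∃ a, p = a + 1 := ⟨p - 1, by omega⟩
  obtain ⟨b, rfl⟩ : ∃ b, q = b + 1 := ⟨q - 1, by omega⟩
  obtain ⟨a', rfl⟩ : ∃ a, p' = a + 1 := ⟨p' - 1, by omega⟩
  obtain ⟨b', rfl⟩ : ∃ b, q' = b + 1 := ⟨q' - 1, by omega⟩
  have e := det_closed ht a b k (by omega) (by omega)
  have e' := det_closed ht a' b' k' (by omega) (by omega)
  rw [h2, hn, e'] at e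
  exact (mul_left_cancel₀ (pow_ne_zero 2 (sub_ne_zero.2 ht.ne')) e).symm

/-- **No two non-isomorphic dumbbell graphs are L-cospectral.** -/
theorem dumbbell_lapCospectral_eq (p k q p' k' q' : ℕ)
    (hq : 3 ≤ q) (hqp : q ≤ p) (hq' : 3 ≤ q') (hqp' : q' ≤ p')
    (hcospectral :
      ((dumbbellGraph p k q).lapMatrix ℚ).charpoly =
        ((dumbbellGraph p' k' q').lapMatrix ℚ).charpoly) :
    (p, q, k) = (p', q', k') ∧
      Nonempty (dumbbellGraph p k q ≃g dumbbellGraph p' k' q') := by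
  obtain ⟨hn, h⟩ := gPoly_eq_of_charpoly_eq (hq.trans hqp) hq (hq'.trans hqp') hq' hcospectral
  have hqq : q = q' :=
    le_antisymm (gPoly_inj hq' hqp' hqp hn.symm h.symm) (gPoly_inj hq hqp hqp' hn h)
  have hmul := gPoly_mul_eq hn (by omega) h
  subst hqq
  have hpp : p = p' := Nat.eq_of_mul_eq_mul_right (by omega) hmul
  subst hpp
  obtain rfl : k = k' := by omega
  exact ⟨rfl, ⟨SimpleGraph.Iso.refl⟩⟩
end

section
/- No two non-isomorphic theta graphs are L-cospectral: if r ≥ s ≥ t ≥ 0 with (s,t) ≠ (0,0), r' ≥ s' ≥ t' ≥ 0 with (s',t') ≠ (0,0), and the Laplacian matrices of the theta graphs Θ_{r,s,t} and Θ_{r',s',t'} have equal characteristic polynomials, then (r, s, t) = (r', s', t'), and hence Θ_{r,s,t} and Θ_{r',s',t'} are isomorphic. -/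
/-!
Write `x = 2 - z - z⁻¹` with `z > 2`, put `S n = z ^ n - z ^ (-n)`, and let `a = r + 1`, `b = s + 1`,
`c = t + 1` be the lengths of the three paths and `m = a + b + c` the number of edges. The interior
of a path of length `d` is a tridiagonal block of `L - x I`, with diagonal entries `z + z⁻¹` and
determinant `S d / S 1`. Eliminating the three interiors by Schur complements (`det_attach`) leaves a
`2 × 2` determinant (`det_thetaBlocks`), so `det (L - x I)` equals
`(S a * S b * S c / S 1 ^ 3) * (A ^ 2 - B ^ 2)`, where `A = z + z⁻¹ + 1 - ∑ S (d - 1) / S d`,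
`B = ∑ S 1 / S d` and the sums run over `d ∈ {a, b, c}`.

The key point is that `S a * S b * S c * (A ^ 2 - B ^ 2)` splits as `-(K + E a + E b + E c)`, where
`K` depends only on `z` and `m`, and
`E d = S (m - 2d) - 2 S (m - 2d - 1) + S (m - 2d - 2) - 4 S d + 2 S (d + 2) + 2 S (d - 2)`
(`det_eq_poly`). Cospectral theta graphs have the same number of vertices, hence the same `m`, so the
sum of the `E d` agrees for both at every rational `z > 2`; after multiplication by `z ^ (m + 2)`
this is an identity of polynomials (`thetaPoly_eq_of_charpoly_eq`).

Comparing coefficients then recovers the lengths. The terms of odd weight detect the shortest length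
(`shortest_le`), except that when the two shortest lengths coincide the term `2 S (d + 2)` of the
longest path is used instead; with the shortest length known, that same term gives the longest one
(`longest_le`), and `m` gives the remaining one.
-/

open Polynomial Matrix SimpleGraph
open scoped Classical

/-! ### Laplacians of paths at `2 - z - z⁻¹` -/

/-- `z ^ n - z ^ (-n)`, twice a hyperbolic sine. The quotient `sn z (n + 1) / sn z 1` is the value at
`(z + z⁻¹) / 2` of the `n`-th Chebyshev polynomial of the second kind. -/
def sn (z : ℚ) (n : ℕ) : ℚ := z ^ n - (z ^ n)⁻¹

lemma sn_zero (z : ℚ) : sn z 0 = 0 := by simp [sn]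

lemma sn_pos {z : ℚ} (hz : 2 < z) (n : ℕ) : 0 < sn z (n + 1) := by
  have h : 1 < z ^ (n + 1) := one_lt_pow₀ (by linarith) (by omega)
  have := inv_lt_one_of_one_lt₀ h
  unfold sn
  linarith

lemma sn_rec {z : ℚ} (hz : 2 < z) (n : ℕ) :
    (z + z⁻¹) * sn z (n + 1) = sn z (n + 2) + sn z n := by
  have : z ≠ 0 := by linarith
  unfold sn
  field_simp
  ring

/-- The tridiagonal `m × m` matrix with `z + z⁻¹` on the diagonal and `-1` next to it: the block of
`L - (2 - z - z⁻¹) I` belonging to the `m` internal vertices of a path. -/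
def tri (z : ℚ) (m : ℕ) : Matrix (Fin m) (Fin m) ℚ :=
  Matrix.of fun i j =>
    if (i : ℕ) = j then z + z⁻¹
    else if (i : ℕ) + 1 = j ∨ (j : ℕ) + 1 = i then -1 else 0

/-- A row of `tri z m` applied to the values `f 1, …, f m` is the second-order difference of `f`,
up to the boundary terms `f 0` and `f (m + 1)`. -/
lemma tri_sum (z : ℚ) (m : ℕ) (f : ℕ → ℚ) (i : Fin m) :
    ∑ j : Fin m, tri z m i j * f (j + 1) =
      (z + z⁻¹) * f (i + 1) - f i - f (i + 2) + (if (i : ℕ) = 0 then f 0 else 0) +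
        (if (i : ℕ) + 1 = m then f (m + 1) else 0) := by
  have h (j : Fin m) : tri z m i j * f (j + 1) =
      (if (i : ℕ) = j then (z + z⁻¹) * f (j + 1) else 0)
        - (if (i : ℕ) + 1 = j then f (j + 1) else 0)
        - (if (i : ℕ) = j + 1 then f (j + 1) else 0) := by
    simp only [tri, Matrix.of_apply]
    split_ifs <;> first | omega | simp
  simp only [h, Finset.sum_sub_distrib]
  rw [Fin.sum_univ_eq_sum_range (fun j => if (i : ℕ) = j then (z + z⁻¹) * f (j + 1) else 0),
    Fin.sum_univ_eq_sum_range (fun j => if (i : ℕ) + 1 = j then f (j + 1) else 0),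
    Fin.sum_univ_eq_sum_range (fun j => if (i : ℕ) = j + 1 then f (j + 1) else 0)]
  have hi := i.2
  have h3 : ∑ j ∈ Finset.range m, (if (i : ℕ) = j + 1 then f (j + 1) else 0) =
      f i - if (i : ℕ) = 0 then f 0 else 0 := by
    have := Finset.sum_range_succ' (fun j => if (i : ℕ) = j then f j else 0) m
    simp only [Finset.sum_ite_eq, Finset.mem_range] at this
    rw [if_pos (by omega)] at this
    linarith
  rw [h3]
  simp only [Finset.sum_ite_eq, Finset.mem_range]
  rw [if_pos hi]
  by_cases h1 : (i : ℕ) + 1 = m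
  · rw [if_neg (by omega), if_pos h1, show m + 1 = (i : ℕ) + 2 by omega]; ring
  · rw [if_pos (by omega), if_neg h1]; ring

lemma prod_sn {z : ℚ} (hz : 2 < z) (m : ℕ) :
    ∏ i : Fin m, sn z (i + 2) / sn z (i + 1) = sn z (m + 1) / sn z 1 := by
  rw [Fin.prod_univ_eq_prod_range (fun i => sn z (i + 2) / sn z (i + 1))]
  induction m with
  | zero => simp [(sn_pos hz 0).ne']
  | succ m ih =>
    rw [Finset.prod_range_succ, ih]
    have := (sn_pos hz 0).ne'
    have := (sn_pos hz m).ne'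
    field_simp

/-- Multiplication by an upper unitriangular matrix built from `sn` makes `tri z m` lower triangular
with diagonal entries `sn z (i + 2) / sn z (i + 1)`. -/
lemma det_tri {z : ℚ} (hz : 2 < z) (m : ℕ) : (tri z m).det = sn z (m + 1) / sn z 1 := by
  let C : Matrix (Fin m) (Fin m) ℚ :=
    Matrix.of fun i j => if (i : ℕ) + 1 ≤ j + 1 then sn z (i + 1) / sn z (j + 1) else 0
  have hC : C.det = 1 := by
    rw [Matrix.det_of_isUpperTriangular]
    · simp [C, (sn_pos hz _).ne']
    · intro i j hij
      have : (j : ℕ) < i := hij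
      simp [C]
      omega
  have hmul (i j : Fin m) (hij : i ≤ j) : (tri z m * C) i j =
      if i = j then sn z (i + 2) / sn z (i + 1) else 0 := by
    have hij' : (i : ℕ) ≤ j := hij
    have := tri_sum z m (fun p => if p ≤ (j : ℕ) + 1 then sn z p / sn z (j + 1) else 0) i
    rw [Matrix.mul_apply]
    refine this.trans ?_
    have hs := (sn_pos hz j).ne'
    have hr := sn_rec hz i
    have hj := j.2
    simp only [sn_zero]
    rw [if_pos (by omega), if_pos (by omega), if_neg (show ¬ (m + 1 ≤ (j : ℕ) + 1) by omega)]
    split_ifs with h1 h2 h3 h4 h5 h6 <;> first | omega | skip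
    all_goals try rw [‹i = j›] at hr ⊢
    all_goals linear_combination hr / sn z (j + 1)
  have hd : (tri z m * C).det = sn z (m + 1) / sn z 1 := by
    rw [Matrix.det_of_isLowerTriangular]
    · rw [← prod_sn hz]
      exact Finset.prod_congr rfl fun i _ => by rw [hmul i i le_rfl, if_pos rfl]
    · intro i j hij
      have hij' : i < j := hij
      rw [hmul i j hij'.le, if_neg hij'.ne]
  rwa [Matrix.det_mul, hC, mul_one] at hd

/-! ### Attaching a path to a matrix -/

/-- The off-diagonal block joining the first vertex of a path on `m` vertices to the vertex with
indicator vector `p`, and its last vertex to the one with indicator vector `q`. -/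
def link {ι : Type*} (m : ℕ) (p q : ι → ℚ) : Matrix (Fin m) ι ℚ :=
  Matrix.of fun i j =>
    -((if (i : ℕ) = 0 then 1 else 0) * p j + (if (i : ℕ) + 1 = m then 1 else 0) * q j)

/-- The symmetric matrix (of rank at most two) `x (p pᵀ + q qᵀ) + y (p qᵀ + q pᵀ)`. -/
def ends {ι : Type*} (p q : ι → ℚ) (x y : ℚ) : Matrix ι ι ℚ :=
  Matrix.of fun j k => x * (p j * p k + q j * q k) + y * (p j * q k + q j * p k)

/-- Elimination, by a Schur complement, of a path with `m` internal vertices joining the vertices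
`p` and `q`. For `m = 0` the path is an edge, recorded by the entry `-1` that
`M - ends p q 0 1` puts at `(p, q)`. -/
lemma det_attach {ι : Type*} [Fintype ι] [DecidableEq ι] {z : ℚ} (hz : 2 < z) (m : ℕ)
    (p q : ι → ℚ) (M : Matrix ι ι ℚ) :
    (Matrix.fromBlocks (tri z m) (link m p q) (link m p q).transpose
      (M - ends p q 0 (if m = 0 then 1 else 0))).det =
    sn z (m + 1) / sn z 1 *
      (M - ends p q (sn z m / sn z (m + 1)) (sn z 1 / sn z (m + 1))).det := by
  have hs := (sn_pos hz 0).ne'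
  rcases m with _ | m
  · rw [show link 0 p q = 0 from Subsingleton.elim _ _, Matrix.transpose_zero, Matrix.det_fromBlocks_zero₂₁,
      Matrix.det_isEmpty]
    simp [sn_zero, div_self hs]
  have hs1 := (sn_pos hz (m + 1)).ne'
  have hdet := det_tri hz (m + 1)
  have hunit : IsUnit (tri z (m + 1)).det := by
    rw [hdet]; exact (div_ne_zero hs1 hs).isUnit
  -- `Y = (tri z (m + 1))⁻¹ * link (m + 1) p q`: its columns are the two solutions of the recurrence
  -- `sn_rec` that vanish beyond one end of the path.
  let Y : Matrix (Fin (m + 1)) ι ℚ := Matrix.of fun i j =>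
    -(sn z (m + 1 - i) / sn z (m + 2) * p j + sn z (i + 1) / sn z (m + 2) * q j)
  have hY : tri z (m + 1) * Y = link (m + 1) p q := by
    ext i j
    have h1 := tri_sum z (m + 1) (fun p => sn z (m + 2 - p) / sn z (m + 2)) i
    have h2 := tri_sum z (m + 1) (fun p => sn z p / sn z (m + 2)) i
    have hi := i.2
    have e1 : (z + z⁻¹) * sn z (m + 2 - (i + 1)) = sn z (m + 2 - i) + sn z (m + 2 - (i + 2)) := by
      have := sn_rec hz (m - i)
      rw [show m + 2 - ((i : ℕ) + 1) = m - i + 1 by omega,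
        show m + 2 - (i : ℕ) = m - i + 2 by omega, show m + 2 - ((i : ℕ) + 2) = m - i by omega]
      exact this
    have e2 := sn_rec hz i
    have h1' : ∑ j : Fin (m + 1), tri z (m + 1) i j * (sn z (m + 1 - j) / sn z (m + 2)) =
        if (i : ℕ) = 0 then 1 else 0 := by
      have e : ∀ j : Fin (m + 1), m + 1 - (j : ℕ) = m + 2 - (j + 1) := fun j => by omega
      simp only [e]
      refine h1.trans ?_
      simp only [Nat.sub_zero, div_self hs1, Nat.sub_self, sn_zero, zero_div, ite_self]
      linear_combination e1 / sn z (m + 2)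
    have h2' : ∑ j : Fin (m + 1), tri z (m + 1) i j * (sn z (j + 1) / sn z (m + 2)) =
        if (i : ℕ) + 1 = m + 1 then 1 else 0 := by
      refine h2.trans ?_
      simp only [div_self hs1, sn_zero, zero_div, ite_self]
      linear_combination e2 / sn z (m + 2)
    rw [Matrix.mul_apply]
    simp only [Y, link, Matrix.of_apply]
    rw [← h1', ← h2', Finset.sum_mul, Finset.sum_mul, ← Finset.sum_add_distrib,
      ← Finset.sum_neg_distrib]
    exact Finset.sum_congr rfl fun _ _ => by ring
  have := Matrix.invertibleOfIsUnitDet _ hunit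
  rw [Matrix.det_fromBlocks₁₁, hdet]
  have hinv : ⅟(tri z (m + 1)) * link (m + 1) p q = Y := by
    rw [← hY, ← Matrix.mul_assoc, invOf_mul_self, Matrix.one_mul]
  rw [Matrix.mul_assoc, hinv]
  congr 2
  rw [sub_sub]
  congr 1
  ext j k
  rw [Matrix.add_apply, Matrix.mul_apply]
  have hl : ∀ i : Fin (m + 1), (link (m + 1) p q).transpose j i * Y i k =
      (if i = 0 then - (p j * Y 0 k) else 0) +
      (if i = Fin.last m then - (q j * Y (Fin.last m) k) else 0) := by
    intro i
    have a0 : (0 : Fin (m + 1)) = ⟨0, by omega⟩ := rfl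
    have a1 : i = 0 ↔ (i : ℕ) = 0 := by rw [a0, Fin.ext_iff]
    have a2 : i = Fin.last m ↔ (i : ℕ) + 1 = m + 1 := by
      rw [Fin.ext_iff, Fin.val_last]; omega
    simp only [link, Matrix.transpose_apply, Matrix.of_apply]
    rcases eq_or_ne i 0 with h1 | h1 <;> rcases eq_or_ne i (Fin.last m) with h2 | h2
    · rw [if_pos h1, if_pos h2, if_pos (a1.1 h1), if_pos (a2.1 h2), ← h2, ← h1]; ring
    · rw [if_pos h1, if_neg h2, if_pos (a1.1 h1), if_neg (mt a2.2 h2), ← h1]; ring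
    · rw [if_neg h1, if_pos h2, if_neg (mt a1.2 h1), if_pos (a2.1 h2), ← h2]; ring
    · rw [if_neg h1, if_neg h2, if_neg (mt a1.2 h1), if_neg (mt a2.2 h2)]; ring
  simp only [hl, Finset.sum_add_distrib, Finset.sum_ite_eq', Finset.mem_univ, if_true]
  simp only [ends, Y, Matrix.of_apply, Fin.val_zero, Fin.val_last]
  rw [show m + 1 - m = 1 by omega]
  simp only [Nat.sub_zero, zero_add, Nat.succ_ne_zero, if_false, zero_mul]
  ring

lemma fromBlocks_sub_ends {ι κ : Type*} (A : Matrix κ κ ℚ) (B : Matrix κ ι ℚ) (C : Matrix ι κ ℚ)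
    (D : Matrix ι ι ℚ) (p q : ι → ℚ) (x y : ℚ) :
    Matrix.fromBlocks A B C D -
        ends (Sum.elim (0 : κ → ℚ) p) (Sum.elim (0 : κ → ℚ) q) x y =
      Matrix.fromBlocks A B C (D - ends p q x y) := by
  ext (i | i) (j | j) <;> simp [ends]

/-! ### The Laplacian determinant of a theta graph -/

/-- The block of `L - (2 - z - z⁻¹) I` at the two vertices of degree 3, without a possible edge
between them. -/
def thetaBase (z : ℚ) : Matrix (Fin 2) (Fin 2) ℚ := Matrix.diagonal fun _ => z + z⁻¹ + 1

/-- The matrix `L - (2 - z - z⁻¹) I` of `Θ_{r,s,t}`, with the vertices grouped into the interiors of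
the three paths followed by the two vertices of degree 3. Only the third path may be an edge. -/
abbrev thetaBlocks (z : ℚ) (r s t : ℕ) :
    Matrix (Fin r ⊕ (Fin s ⊕ (Fin t ⊕ Fin 2))) (Fin r ⊕ (Fin s ⊕ (Fin t ⊕ Fin 2))) ℚ :=
  let p : Fin 2 → ℚ := ![1, 0]
  let q : Fin 2 → ℚ := ![0, 1]
  let p₁ : Fin t ⊕ Fin 2 → ℚ := Sum.elim 0 p
  let q₁ : Fin t ⊕ Fin 2 → ℚ := Sum.elim 0 q
  let p₂ : Fin s ⊕ (Fin t ⊕ Fin 2) → ℚ := Sum.elim 0 p₁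
  let q₂ : Fin s ⊕ (Fin t ⊕ Fin 2) → ℚ := Sum.elim 0 q₁
  Matrix.fromBlocks (tri z r) (link r p₂ q₂) (link r p₂ q₂).transpose
    (Matrix.fromBlocks (tri z s) (link s p₁ q₁) (link s p₁ q₁).transpose
      (Matrix.fromBlocks (tri z t) (link t p q) (link t p q).transpose
        (thetaBase z - ends p q 0 (if t = 0 then 1 else 0))))

lemma det_attach_pos {ι : Type*} [Fintype ι] [DecidableEq ι] {z : ℚ} (hz : 2 < z) {m : ℕ}
    (hm : m ≠ 0) (p q : ι → ℚ) (M : Matrix ι ι ℚ) :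
    (Matrix.fromBlocks (tri z m) (link m p q) (link m p q).transpose M).det =
    sn z (m + 1) / sn z 1 *
      (M - ends p q (sn z m / sn z (m + 1)) (sn z 1 / sn z (m + 1))).det := by
  rw [← det_attach hz m p q M, if_neg hm]
  congr 2
  ext i j
  simp [ends]

/-- Eliminating the three paths leaves a `2 × 2` determinant with equal diagonal entries. -/
lemma det_thetaBlocks {z : ℚ} (hz : 2 < z) {r s : ℕ} (t : ℕ) (hr : r ≠ 0) (hs : s ≠ 0) :
    (thetaBlocks z r s t).det =
      sn z (r + 1) / sn z 1 * (sn z (s + 1) / sn z 1) * (sn z (t + 1) / sn z 1) *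
      ((z + z⁻¹ + 1 - (sn z r / sn z (r + 1) + sn z s / sn z (s + 1) + sn z t / sn z (t + 1))) ^ 2 -
        (sn z 1 / sn z (r + 1) + sn z 1 / sn z (s + 1) + sn z 1 / sn z (t + 1)) ^ 2) := by
  rw [thetaBlocks, det_attach_pos hz hr, fromBlocks_sub_ends, fromBlocks_sub_ends,
    det_attach_pos hz hs, fromBlocks_sub_ends, sub_right_comm _ (ends _ _ 0 _),
    sub_right_comm _ (ends _ _ 0 _), det_attach hz,
    Matrix.det_fin_two]
  simp [thetaBase, ends]
  ring

/-- The orientation of the edges of `Θ_{r,s,t}` (for `r, s ≠ 0`) along the three paths from `0` to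
`r + s + t + 1`, as disjoint cases: edges out of `0`, edges ending the first two paths, and edges
`a → a + 1`. The third path contributes only edges of the first and last kinds. -/
def thetaDir (r s t a b : ℕ) : Prop :=
  (a = 0 ∧ (b = 1 ∨ b = r + 1 ∨ b = r + s + 1)) ∨
  (0 < a ∧ (a = r ∨ a = r + s) ∧ b = r + s + t + 1) ∨
  (0 < a ∧ a ≠ r ∧ a ≠ r + s ∧ b = a + 1)

lemma thetaDir_iff {r s t a b : ℕ} (hr : r ≠ 0) (hs : s ≠ 0) (ha : a < r + s + t + 2)
    (hb : b < r + s + t + 2) :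
    (thetaBlockRel (r + s + t + 1) 1 r a b ∨ thetaBlockRel (r + s + t + 1) (r + 1) s a b ∨
      thetaBlockRel (r + s + t + 1) (r + s + 1) t a b) ↔ thetaDir r s t a b := by
  simp only [thetaBlockRel, if_neg hr, if_neg hs, thetaDir]
  rcases Nat.eq_zero_or_pos t with ht | ht
  · rw [if_pos ht]
    constructor
    · rintro ((h | h | h) | (h | h | h) | h) <;> omega
    · rintro (⟨h, h' | h' | h'⟩ | ⟨h, h' | h', h''⟩ | h) <;> omega
  · rw [if_neg ht.ne']
    constructor
    · rintro ((h | h | h) | (h | h | h) | h | h | h) <;> omega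
    · rintro (⟨h, h' | h' | h'⟩ | ⟨h, h' | h', h''⟩ | h) <;> omega

lemma thetaGraph_adj {r s : ℕ} (t : ℕ) (hr : r ≠ 0) (hs : s ≠ 0) (x y : Fin (r + s + t + 2)) :
    (thetaGraph r s t).Adj x y ↔ thetaDir r s t x y ∨ thetaDir r s t y x := by
  rw [thetaGraph, SimpleGraph.fromRel_adj, thetaDir_iff hr hs x.2 y.2, thetaDir_iff hr hs y.2 x.2,
    and_iff_right_iff_imp]
  rintro (h | h) rfl <;> simp only [thetaDir] at h <;> omega

lemma degree_two {n : ℕ} (G : SimpleGraph (Fin n)) (x : Fin n) (a b : ℕ) (ha : a < n) (hb : b < n)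
    (hab : a ≠ b) (h : ∀ y, G.Adj x y ↔ (y : ℕ) = a ∨ (y : ℕ) = b) : G.degree x = 2 := by
  have : G.neighborFinset x = {⟨a, ha⟩, ⟨b, hb⟩} := by
    ext y; simp [h, Fin.ext_iff]
  rw [← SimpleGraph.card_neighborFinset_eq_degree, this, Finset.card_pair]
  simpa [Fin.ext_iff] using hab

lemma degree_three {n : ℕ} (G : SimpleGraph (Fin n)) (x : Fin n) (a b c : ℕ) (ha : a < n)
    (hb : b < n) (hc : c < n) (hab : a ≠ b) (hac : a ≠ c) (hbc : b ≠ c)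
    (h : ∀ y, G.Adj x y ↔ (y : ℕ) = a ∨ (y : ℕ) = b ∨ (y : ℕ) = c) : G.degree x = 3 := by
  have : G.neighborFinset x = {⟨a, ha⟩, ⟨b, hb⟩, ⟨c, hc⟩} := by
    ext y; simp [h, Fin.ext_iff]
  rw [← SimpleGraph.card_neighborFinset_eq_degree, this]
  exact Finset.card_eq_three.2 ⟨_, _, _, by simpa [Fin.ext_iff] using hab,
    by simpa [Fin.ext_iff] using hac, by simpa [Fin.ext_iff] using hbc, rfl⟩

lemma thetaGraph_degree {r s : ℕ} (t : ℕ) (hr : r ≠ 0) (hs : s ≠ 0) (x : Fin (r + s + t + 2)) :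
    (thetaGraph r s t).degree x = if (x : ℕ) = 0 ∨ (x : ℕ) = r + s + t + 1 then 3 else 2 := by
  have hx := x.2
  split_ifs with h
  · rcases h with h | h
    · apply degree_three _ x 1 (r + 1) (r + s + 1) (by omega) (by omega) (by omega) (by omega)
        (by omega) (by omega)
      intro y
      have hy := y.2
      rw [thetaGraph_adj t hr hs]
      simp only [thetaDir]
      omega
    · apply degree_three _ x r (r + s) (if t = 0 then 0 else r + s + t) (by omega) (by omega)
        (by split_ifs <;> omega) (by omega) (by split_ifs <;> omega) (by split_ifs <;> omega)
      intro y
      have hy := y.2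
      rw [thetaGraph_adj t hr hs]
      simp only [thetaDir]
      split_ifs <;> omega
  · rw [not_or] at h
    have c0 : 0 < (x : ℕ) := Nat.pos_of_ne_zero h.1
    have h2 := h.2
    by_cases c1 : (x : ℕ) = r ∨ (x : ℕ) = r + s <;>
      by_cases c2 : (x : ℕ) = r + 1 ∨ (x : ℕ) = r + s + 1
    · apply degree_two _ x 0 (r + s + t + 1) (by omega) (by omega) (by omega)
      intro y
      have hy := y.2
      rw [thetaGraph_adj t hr hs]
      simp only [thetaDir]
      constructor
      · rintro ((h | ⟨_, h | h, h'⟩ | h) | (h | ⟨_, h | h, h'⟩ | h)) <;> omega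
      · rintro (h | h) <;> omega
    · apply degree_two _ x (x - 1) (r + s + t + 1) (by omega) (by omega) (by omega)
      intro y
      have hy := y.2
      rw [thetaGraph_adj t hr hs]
      simp only [thetaDir]
      constructor
      · rintro ((h | ⟨_, h | h, h'⟩ | h) | (h | ⟨_, h | h, h'⟩ | h)) <;> omega
      · rintro (h | h) <;> omega
    · apply degree_two _ x 0 (x + 1) (by omega) (by omega) (by omega)
      intro y
      have hy := y.2
      rw [thetaGraph_adj t hr hs]
      simp only [thetaDir]
      constructor
      · rintro ((h | ⟨_, h | h, h'⟩ | h) | (h | ⟨_, h | h, h'⟩ | h)) <;> omega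
      · rintro (h | h) <;> omega
    · apply degree_two _ x (x - 1) (x + 1) (by omega) (by omega) (by omega)
      intro y
      have hy := y.2
      rw [thetaGraph_adj t hr hs]
      simp only [thetaDir]
      constructor
      · rintro ((h | ⟨_, h | h, h'⟩ | h) | (h | ⟨_, h | h, h'⟩ | h)) <;> omega
      · rintro (h | h) <;> omega

/-- The numbering of the vertices of `Θ_{r,s,t}` by the index type of `thetaBlocks`. The last
summand sends `0` and `1` to the two vertices of degree 3, `0` and `r + s + t + 1`. -/
def thetaVertex (r s t : ℕ) : Fin r ⊕ (Fin s ⊕ (Fin t ⊕ Fin 2)) → Fin (r + s + t + 2)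
  | .inl i => ⟨1 + i, by omega⟩
  | .inr (.inl i) => ⟨r + 1 + i, by omega⟩
  | .inr (.inr (.inl i)) => ⟨r + s + 1 + i, by omega⟩
  | .inr (.inr (.inr i)) => ⟨i * (r + s + t + 1), by fin_cases i <;> simp⟩

lemma thetaVertex_bijective (r s t : ℕ) : Function.Bijective (thetaVertex r s t) := by
  rw [Fintype.bijective_iff_injective_and_card]
  refine ⟨?_, by simp; ring⟩
  rintro (i | i | i | i) (j | j | j | j) h
  all_goals
    try fin_cases i
    try fin_cases j
  all_goals
    simp [thetaVertex, Fin.ext_iff] at h ⊢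
  all_goals omega

/-- The `(a, b)` entry of `L - (2 - z - z⁻¹) I` for `Θ_{r,s,t}`, with vertices as natural numbers. -/
noncomputable def thetaEntry (z : ℚ) (r s t a b : ℕ) : ℚ :=
  if a = b then (if a = 0 ∨ a = r + s + t + 1 then z + z⁻¹ + 1 else z + z⁻¹)
  else if thetaDir r s t a b ∨ thetaDir r s t b a then -1 else 0

lemma thetaEntry_comm (z : ℚ) (r s t a b : ℕ) : thetaEntry z r s t a b = thetaEntry z r s t b a := by
  unfold thetaEntry
  by_cases h : a = b
  · rw [h]
  · rw [if_neg h, if_neg (Ne.symm h)]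
    simp only [or_comm]

lemma thetaEntry_of_ne {z : ℚ} {r s t a b : ℕ} (P : Prop) [Decidable P] (h : a ≠ b)
    (hP : thetaDir r s t a b ∨ thetaDir r s t b a ↔ P) :
    thetaEntry z r s t a b = if P then -1 else 0 := by
  rw [thetaEntry, if_neg h]
  simp only [hP]

lemma thetaEntry_of_not {z : ℚ} {r s t a b : ℕ} (h : a ≠ b)
    (hP : ¬ (thetaDir r s t a b ∨ thetaDir r s t b a)) : thetaEntry z r s t a b = 0 := by
  rw [thetaEntry, if_neg h, if_neg hP]

lemma thetaEntry_path {z : ℚ} {r s t i j : ℕ} (o : ℕ) (ho : o + i ≠ 0 ∧ o + i ≠ r + s + t + 1)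
    (h : i ≠ j → (thetaDir r s t (o + i) (o + j) ∨ thetaDir r s t (o + j) (o + i) ↔
      i + 1 = j ∨ j + 1 = i)) :
    thetaEntry z r s t (o + i) (o + j) =
      if i = j then z + z⁻¹ else if i + 1 = j ∨ j + 1 = i then -1 else 0 := by
  by_cases hij : i = j
  · subst hij
    simp only [thetaEntry, if_true]
    rw [if_neg (by tauto)]
  · rw [if_neg hij]
    exact thetaEntry_of_ne _ (by omega) (h hij)

lemma lap_entry {r s : ℕ} (t : ℕ) (hr : r ≠ 0) (hs : s ≠ 0) (z : ℚ) (x y : Fin (r + s + t + 2)) :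
    ((thetaGraph r s t).lapMatrix ℚ - Matrix.scalar (Fin (r + s + t + 2)) (2 - z - z⁻¹)) x y =
      thetaEntry z r s t x y := by
  unfold thetaEntry
  by_cases h : x = y
  · subst h
    simp only [SimpleGraph.lapMatrix, SimpleGraph.degMatrix, Matrix.sub_apply,
      Matrix.diagonal_apply_eq, SimpleGraph.adjMatrix_apply, SimpleGraph.irrefl, if_false,
      Matrix.scalar_apply, thetaGraph_degree t hr hs, if_true]
    split_ifs <;> push_cast <;> ring
  · have h' : (x : ℕ) ≠ y := fun e => h (Fin.ext e)
    simp only [SimpleGraph.lapMatrix, SimpleGraph.degMatrix, Matrix.sub_apply,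
      Matrix.diagonal_apply_ne _ h, SimpleGraph.adjMatrix_apply, Matrix.scalar_apply, if_neg h',
      thetaGraph_adj t hr hs]
    split_ifs <;> simp

lemma lap_submatrix {r s : ℕ} (t : ℕ) (hr : r ≠ 0) (hs : s ≠ 0) (z : ℚ) :
    ((thetaGraph r s t).lapMatrix ℚ - Matrix.scalar (Fin (r + s + t + 2)) (2 - z - z⁻¹)).submatrix
      (thetaVertex r s t) (thetaVertex r s t) = thetaBlocks z r s t := by
  -- entries inside the three paths
  have h11 (i j : Fin r) : thetaEntry z r s t (1 + i) (1 + j) = tri z r i j := by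
    refine thetaEntry_path 1 (by omega) fun h => ?_
    have hi := i.2
    have hj := j.2
    simp only [thetaDir]
    omega
  have h22 (i j : Fin s) : thetaEntry z r s t (r + 1 + i) (r + 1 + j) = tri z s i j := by
    refine thetaEntry_path (r + 1) (by omega) fun h => ?_
    have hi := i.2
    have hj := j.2
    simp only [thetaDir]
    omega
  have h33 (i j : Fin t) : thetaEntry z r s t (r + s + 1 + i) (r + s + 1 + j) = tri z t i j := by
    refine thetaEntry_path (r + s + 1) (by omega) fun h => ?_
    have hi := i.2
    have hj := j.2
    simp only [thetaDir]
    omega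
  -- entries between different paths
  have h12 (i : Fin r) (j : Fin s) : thetaEntry z r s t (1 + i) (r + 1 + j) = 0 := by
    refine thetaEntry_of_not (by omega) ?_
    simp only [thetaDir]
    omega
  have h13 (i : Fin r) (j : Fin t) : thetaEntry z r s t (1 + i) (r + s + 1 + j) = 0 := by
    refine thetaEntry_of_not (by omega) ?_
    simp only [thetaDir]
    omega
  have h23 (i : Fin s) (j : Fin t) : thetaEntry z r s t (r + 1 + i) (r + s + 1 + j) = 0 := by
    refine thetaEntry_of_not (by omega) ?_
    simp only [thetaDir]
    omega
  -- entries between a path and the two vertices of degree three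
  have h1u (i : Fin r) : thetaEntry z r s t (1 + i) 0 = -(if (i : ℕ) = 0 then 1 else 0) := by
    rw [thetaEntry_of_ne ((i : ℕ) = 0) (by omega) (by
      have hi := i.2
      simp only [thetaDir]
      constructor
      · rintro ((h | ⟨_, h | h, h'⟩ | h) | (h | ⟨_, h | h, h'⟩ | h)) <;> omega
      · intro h
        exact Or.inr (Or.inl ⟨trivial, Or.inl (by omega)⟩))]
    split_ifs <;> simp
  have h1v (i : Fin r) : thetaEntry z r s t (1 + i) (r + s + t + 1) =
      -(if (i : ℕ) + 1 = r then 1 else 0) := by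
    rw [thetaEntry_of_ne ((i : ℕ) + 1 = r) (by omega) (by
      have hi := i.2
      simp only [thetaDir]
      constructor
      · rintro ((h | ⟨_, h | h, h'⟩ | h) | (h | ⟨_, h | h, h'⟩ | h)) <;> omega
      · intro h
        exact Or.inl (Or.inr (Or.inl ⟨by omega, Or.inl (by omega), trivial⟩)))]
    split_ifs <;> simp
  have h2u (i : Fin s) : thetaEntry z r s t (r + 1 + i) 0 = -(if (i : ℕ) = 0 then 1 else 0) := by
    rw [thetaEntry_of_ne ((i : ℕ) = 0) (by omega) (by
      have hi := i.2
      simp only [thetaDir]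
      constructor
      · rintro ((h | ⟨_, h | h, h'⟩ | h) | (h | ⟨_, h | h, h'⟩ | h)) <;> omega
      · intro h
        exact Or.inr (Or.inl ⟨trivial, Or.inr (Or.inl (by omega))⟩))]
    split_ifs <;> simp
  have h2v (i : Fin s) : thetaEntry z r s t (r + 1 + i) (r + s + t + 1) =
      -(if (i : ℕ) + 1 = s then 1 else 0) := by
    rw [thetaEntry_of_ne ((i : ℕ) + 1 = s) (by omega) (by
      have hi := i.2
      simp only [thetaDir]
      constructor
      · rintro ((h | ⟨_, h | h, h'⟩ | h) | (h | ⟨_, h | h, h'⟩ | h)) <;> omega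
      · intro h
        exact Or.inl (Or.inr (Or.inl ⟨by omega, Or.inr (by omega), trivial⟩)))]
    split_ifs <;> simp
  have h3u (i : Fin t) : thetaEntry z r s t (r + s + 1 + i) 0 =
      -(if (i : ℕ) = 0 then 1 else 0) := by
    rw [thetaEntry_of_ne ((i : ℕ) = 0) (by omega) (by
      have hi := i.2
      simp only [thetaDir]
      constructor
      · rintro ((h | ⟨_, h | h, h'⟩ | h) | (h | ⟨_, h | h, h'⟩ | h)) <;> omega
      · intro h
        exact Or.inr (Or.inl ⟨trivial, Or.inr (Or.inr (by omega))⟩))]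
    split_ifs <;> simp
  have h3v (i : Fin t) : thetaEntry z r s t (r + s + 1 + i) (r + s + t + 1) =
      -(if (i : ℕ) + 1 = t then 1 else 0) := by
    rw [thetaEntry_of_ne ((i : ℕ) + 1 = t) (by omega) (by
      have hi := i.2
      simp only [thetaDir]
      constructor
      · rintro ((h | ⟨_, h | h, h'⟩ | h) | (h | ⟨_, h | h, h'⟩ | h)) <;> omega
      · intro h
        omega)]
    split_ifs <;> simp
  -- entries at the two vertices of degree three
  have huu : thetaEntry z r s t 0 0 = z + z⁻¹ + 1 := by simp [thetaEntry]
  have hvv : thetaEntry z r s t (r + s + t + 1) (r + s + t + 1) = z + z⁻¹ + 1 := by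
    simp [thetaEntry]
  have huv : thetaEntry z r s t 0 (r + s + t + 1) = -(if t = 0 then 1 else 0) := by
    rw [thetaEntry_of_ne (t = 0) (by omega) (by
      simp only [thetaDir]
      constructor
      · rintro ((h | ⟨_, h | h, h'⟩ | h) | (h | ⟨_, h | h, h'⟩ | h)) <;> omega
      · intro h
        exact Or.inl (Or.inl ⟨trivial, Or.inr (Or.inr (by omega))⟩))]
    split_ifs <;> simp
  have hc := thetaEntry_comm z r s t
  ext i j
  rw [Matrix.submatrix_apply, lap_entry t hr hs]
  rcases i with (i | i | i | i) <;> rcases j with (j | j | j | j)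
  all_goals try fin_cases i
  all_goals try fin_cases j
  all_goals
    simp only [thetaVertex, thetaBlocks,
      Matrix.fromBlocks_apply₁₁, Matrix.fromBlocks_apply₁₂, Matrix.fromBlocks_apply₂₁,
      Matrix.fromBlocks_apply₂₂]
  all_goals
    try simp only [Matrix.transpose_apply, Matrix.sub_apply, link, ends, thetaBase, Matrix.of_apply,
      Sum.elim_inl, Sum.elim_inr, Pi.zero_apply, Fin.zero_eta, Fin.mk_one, zero_mul, one_mul,
      Matrix.diagonal_apply, Matrix.cons_val_zero, Matrix.cons_val_one]
  -- the entries below the diagonal blocks follow by symmetry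
  all_goals
    first
    | exact h11 i j
    | exact h22 i j
    | exact h33 i j
    | rw [hvv]; simp
    | simp [h12, h13, h23, h1u, h1v, h2u, h2v, h3u, h3v, huu, huv]; done
    | rw [hc]; simp [h12, h13, h23, h1u, h1v, h2u, h2v, h3u, h3v, huv]

/-! ### The characteristic polynomial as a sum over the three paths -/

/-- When `p ^ 2 - s ^ 2` is divisible by `a`, and likewise for `q`, `b` and `r`, `c`, clearing one
factor `a b c` already removes all denominators of the difference of squares. -/
lemma det_expand {a b c p q r p₂ q₂ r₂ s k : ℚ} (ha : a ≠ 0) (hb : b ≠ 0) (hc : c ≠ 0)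
    (hp : p ^ 2 - s ^ 2 = a * p₂) (hq : q ^ 2 - s ^ 2 = b * q₂) (hr : r ^ 2 - s ^ 2 = c * r₂) :
    a * b * c * ((k - (p / a + q / b + r / c)) ^ 2 - (s / a + s / b + s / c) ^ 2) =
      a * b * c * k ^ 2 - 2 * k * (p * b * c + q * a * c + r * a * b) +
        (p₂ * b * c + q₂ * a * c + r₂ * a * b) +
        2 * (c * (p * q - s ^ 2) + b * (p * r - s ^ 2) + a * (q * r - s ^ 2)) := by
  have hp' : p₂ = (p ^ 2 - s ^ 2) / a := by rw [hp]; field_simp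
  have hq' : q₂ = (q ^ 2 - s ^ 2) / b := by rw [hq]; field_simp
  have hr' : r₂ = (r ^ 2 - s ^ 2) / c := by rw [hr]; field_simp
  rw [hp', hq', hr']
  field_simp
  ring

/-- With `m = d + e`, this is `X ^ (m + 2)` times
`S (m - 2d) - 2 S (m - 2d - 1) + S (m - 2d - 2) - 4 S d + 2 S (d + 2) + 2 S (d - 2)`, where
`S n = X ^ n - X ^ (-n)`: the contribution of a path of length `d` in a theta graph whose other
two paths have total length `e`. -/
noncomputable def pathPoly (e d : ℕ) : ℚ[X] :=
  X ^ (2 * e + 2) - X ^ (2 * d + 2) - 2 * X ^ (2 * e + 1) + 2 * X ^ (2 * d + 3) +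
  X ^ (2 * e) - X ^ (2 * d + 4) - 4 * X ^ (2 * d + e + 2) + 4 * X ^ (e + 2) +
  2 * X ^ (2 * d + e + 4) - 2 * X ^ e + 2 * X ^ (2 * d + e) - 2 * X ^ (e + 4)

/-- The sum of the contributions of three paths with `a`, `b` and `c` edges. -/
noncomputable def thetaPoly (a b c : ℕ) : ℚ[X] :=
  pathPoly (b + c) a + pathPoly (a + c) b + pathPoly (a + b) c

/-- The part of the Laplacian determinant that depends only on `z` and on `ζ = z ^ m`, with `m` the
number of edges. -/
def remainder (z ζ : ℚ) : ℚ :=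
  ((ζ - ζ⁻¹) * (-(1 - (z + z⁻¹) / 2) ^ 2 - 9 / 4 * (z - z⁻¹) ^ 2) -
    3 * (1 - (z + z⁻¹) / 2) * (z - z⁻¹) * (ζ + ζ⁻¹)) * (ζ * z ^ 2)

lemma eval_pathPoly (z : ℚ) (e d : ℕ) :
    (pathPoly e d).eval z =
      (z ^ e) ^ 2 * z ^ 2 - (z ^ d) ^ 2 * z ^ 2 - 2 * (z ^ e) ^ 2 * z + 2 * (z ^ d) ^ 2 * z ^ 3 +
      (z ^ e) ^ 2 - (z ^ d) ^ 2 * z ^ 4 - 4 * (z ^ d) ^ 2 * z ^ e * z ^ 2 + 4 * z ^ e * z ^ 2 +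
      2 * (z ^ d) ^ 2 * z ^ e * z ^ 4 - 2 * z ^ e + 2 * (z ^ d) ^ 2 * z ^ e - 2 * z ^ e * z ^ 4 := by
  simp only [pathPoly, eval_add, eval_sub, eval_mul, eval_pow, eval_X, eval_ofNat]
  ring

/-- Up to factors and summands depending only on the number of edges, the Laplacian determinant at
`2 - z - z⁻¹` is the value of `thetaPoly` at `z`. -/
lemma det_eq_poly {z : ℚ} (hz : 2 < z) {r s : ℕ} (t : ℕ) (hr : r ≠ 0) (hs : s ≠ 0) :
    (thetaBlocks z r s t).det * (sn z 1 ^ 3 * z ^ (r + s + t + 5)) =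
      -(remainder z (z ^ (r + s + t + 3)) + (thetaPoly (r + 1) (s + 1) (t + 1)).eval z) := by
  have h0 : z ≠ 0 := by linarith
  have h1 := (sn_pos hz 0).ne'
  have ha := (sn_pos hz r).ne'
  have hb := (sn_pos hz s).ne'
  have hc := (sn_pos hz t).ne'
  -- the identity `S n ^ 2 - S 1 ^ 2 = S (n + 1) S (n - 1)`, with `S (n - 1)` written so that `n = 0`
  -- is allowed
  have key (n : ℕ) : sn z n ^ 2 - sn z 1 ^ 2 =
      sn z (n + 1) * (z ^ (n + 1) * (z ^ 2)⁻¹ - z ^ 2 * (z ^ (n + 1))⁻¹) := by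
    simp only [sn]
    field_simp
    ring
  have := det_expand (k := z + z⁻¹ + 1) ha hb hc (key r) (key s) (key t)
  rw [det_thetaBlocks hz t hr hs]
  have e : ∀ x : ℚ, sn z (r + 1) / sn z 1 * (sn z (s + 1) / sn z 1) * (sn z (t + 1) / sn z 1) * x *
      (sn z 1 ^ 3 * z ^ (r + s + t + 5)) =
      sn z (r + 1) * sn z (s + 1) * sn z (t + 1) * x * z ^ (r + s + t + 5) := by
    intro x
    simp only [zero_add] at h1
    field_simp
  rw [e, this]
  have hsr (n : ℕ) : sn z n = z ^ (n + 1) * z⁻¹ - z * (z ^ (n + 1))⁻¹ := by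
    simp only [sn]
    field_simp
    ring
  have hs1 : sn z 1 = z - z⁻¹ := by simp [sn]
  rw [hs1, hsr r, hsr s, hsr t]
  have e1 : z ^ (r + s + t + 3) = z ^ (r + 1) * z ^ (s + 1) * z ^ (t + 1) := by ring
  have e2 : z ^ (r + s + t + 5) = z ^ (r + 1) * z ^ (s + 1) * z ^ (t + 1) * z ^ 2 := by ring
  simp only [thetaPoly, eval_add, eval_pathPoly, remainder, pow_add z (_ + 1) (_ + 1)]
  rw [e1, e2]
  simp only [sn]
  have hα : z ^ (r + 1) ≠ 0 := pow_ne_zero _ h0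
  have hβ : z ^ (s + 1) ≠ 0 := pow_ne_zero _ h0
  have hγ : z ^ (t + 1) ≠ 0 := pow_ne_zero _ h0
  generalize z ^ (r + 1) = α at *
  generalize z ^ (s + 1) = β at *
  generalize z ^ (t + 1) = γ at *
  clear this e key hsr hs1 ha hb hc h1 e1 e2
  field_simp
  ring

/-! ### Cospectral theta graphs have equal `thetaPoly` -/

lemma det_thetaBlocks_eq_charpoly {r s : ℕ} (t : ℕ) (hr : r ≠ 0) (hs : s ≠ 0) (z : ℚ) :
    (thetaBlocks z r s t).det =
      (-1) ^ (r + s + t + 2) * ((thetaGraph r s t).lapMatrix ℚ).charpoly.eval (2 - z - z⁻¹) := by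
  rw [← lap_submatrix t hr hs z, Matrix.eval_charpoly, ← neg_sub, Matrix.submatrix_neg,
    Pi.neg_apply, Pi.neg_apply, Matrix.det_neg]
  simp only [Fintype.card_sum, Fintype.card_fin]
  have h := Matrix.det_submatrix_equiv_self (Equiv.ofBijective _ (thetaVertex_bijective r s t))
    (Matrix.scalar (Fin (r + s + t + 2)) (2 - z - z⁻¹) - (thetaGraph r s t).lapMatrix ℚ)
  rw [← h]
  congr 2
  ring

/-- The equality holds at every rational `z > 2`, hence as polynomials. -/
lemma thetaPoly_eq_of_charpoly_eq {r s t r' s' t' : ℕ} (hr : r ≠ 0) (hs : s ≠ 0) (hr' : r' ≠ 0)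
    (hs' : s' ≠ 0) (hm : r + s + t = r' + s' + t')
    (h : ((thetaGraph r s t).lapMatrix ℚ).charpoly = ((thetaGraph r' s' t').lapMatrix ℚ).charpoly) :
    thetaPoly (r + 1) (s + 1) (t + 1) = thetaPoly (r' + 1) (s' + 1) (t' + 1) := by
  refine Polynomial.eq_of_infinite_eval_eq _ _ ((Set.Ioi_infinite (2 : ℚ)).mono fun z hz => ?_)
  have h1 := det_eq_poly hz t hr hs
  have h2 := det_eq_poly hz t' hr' hs'
  rw [det_thetaBlocks_eq_charpoly t hr hs, h, hm] at h1
  rw [det_thetaBlocks_eq_charpoly t' hr' hs', h1] at h2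
  simpa using h2

/-! ### Recovering the path lengths from the coefficients -/

/-- The coefficient of `X ^ n` in `pathPoly e d`. -/
def pathCoeff (e d n : ℕ) : ℤ :=
  (if n = 2 * e + 2 then 1 else 0) - (if n = 2 * d + 2 then 1 else 0) -
  2 * (if n = 2 * e + 1 then 1 else 0) + 2 * (if n = 2 * d + 3 then 1 else 0) +
  (if n = 2 * e then 1 else 0) - (if n = 2 * d + 4 then 1 else 0) -
  4 * (if n = 2 * d + e + 2 then 1 else 0) + 4 * (if n = e + 2 then 1 else 0) +
  2 * (if n = 2 * d + e + 4 then 1 else 0) - 2 * (if n = e then 1 else 0) +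
  2 * (if n = 2 * d + e then 1 else 0) - 2 * (if n = e + 4 then 1 else 0)

lemma coeff_pathPoly (e d n : ℕ) : (pathPoly e d).coeff n = pathCoeff e d n := by
  have h2 : (2 : ℚ[X]) = C 2 := rfl
  have h4 : (4 : ℚ[X]) = C 4 := rfl
  simp only [pathPoly, pathCoeff, h2, h4, coeff_add, coeff_sub, coeff_C_mul, coeff_X_pow]
  push_cast
  rfl

/-- Only four of the terms of `pathPoly` have an odd coefficient. -/
lemma pathCoeff_even {e d n : ℕ} (h1 : n ≠ 2 * e + 2) (h2 : n ≠ 2 * d + 2) (h3 : n ≠ 2 * e)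
    (h4 : n ≠ 2 * d + 4) : Even (pathCoeff e d n) := by
  rw [pathCoeff, if_neg h1, if_neg h2, if_neg h3, if_neg h4, Int.even_iff]
  omega

lemma pathCoeff_odd {e d n : ℕ} (h1 : n = 2 * e + 2) (h2 : n ≠ 2 * d + 2) (h3 : n ≠ 2 * e)
    (h4 : n ≠ 2 * d + 4) : Odd (pathCoeff e d n) := by
  rw [pathCoeff, if_pos h1, if_neg h2, if_neg h3, if_neg h4, Int.odd_iff]
  omega

/-- In the exponents from `2 * d + e + 4` on, the only terms besides `2 X ^ (2d + e + 4)` are those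
in `X ^ (2e + 2)`, `X ^ (2e + 1)` and `X ^ (2e)`. -/
lemma pathCoeff_high {e d n : ℕ} (he : 1 ≤ e) (hd : 1 ≤ d) (hn : 2 * d + e + 4 ≤ n)
    (h1 : n ≠ 2 * e + 2) (h2 : n ≠ 2 * e + 1) (h3 : n ≠ 2 * e) :
    pathCoeff e d n = if n = 2 * d + e + 4 then 2 else 0 := by
  rw [pathCoeff, if_neg h1, if_neg (show n ≠ 2 * d + 2 by omega), if_neg h2,
    if_neg (show n ≠ 2 * d + 3 by omega), if_neg h3, if_neg (show n ≠ 2 * d + 4 by omega),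
    if_neg (show n ≠ 2 * d + e + 2 by omega), if_neg (show n ≠ e + 2 by omega),
    if_neg (show n ≠ e by omega), if_neg (show n ≠ 2 * d + e by omega),
    if_neg (show n ≠ e + 4 by omega)]
  split_ifs <;> simp

lemma coeff_thetaPoly_eq {a b c a' b' c' : ℕ} (h : thetaPoly a b c = thetaPoly a' b' c') (n : ℕ) :
    pathCoeff (b + c) a n + pathCoeff (a + c) b n + pathCoeff (a + b) c n =
      pathCoeff (b' + c') a' n + pathCoeff (a' + c') b' n + pathCoeff (a' + b') c' n := by
  have h' := congrArg (fun p : ℚ[X] => p.coeff n) h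
  simp only [thetaPoly, coeff_add, coeff_pathPoly] at h'
  exact_mod_cast h'

/-- If `c < c'`, some coefficient tells the two polynomials apart. For `c < b` this is the coefficient
of `X ^ (2 (a + b) + 2)`, which is odd on the left, due to the path of length `c` alone, and even on
the right. For `b = c` necessarily `a' < a`, and the coefficient of `X ^ (m + 4 + a)`, with
`m = a + b + c`, is at least `2` on the left and zero on the right. -/
lemma shortest_le {a b c a' b' c' : ℕ} (hc : 1 ≤ c) (hb : 2 ≤ b) (hcb : c ≤ b) (hba : b ≤ a)
    (hcb' : c' ≤ b') (hba' : b' ≤ a') (hm : a + b + c = a' + b' + c')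
    (h : thetaPoly a b c = thetaPoly a' b' c') : c' ≤ c := by
  by_contra! hlt
  rcases hcb.lt_or_eq with hcb | rfl
  · have H := coeff_thetaPoly_eq h (2 * (a + b) + 2)
    obtain ⟨k₁, e₁⟩ := pathCoeff_even (e := b + c) (d := a) (n := 2 * (a + b) + 2) (by omega)
      (by omega) (by omega) (by omega)
    obtain ⟨k₂, e₂⟩ := pathCoeff_even (e := a + c) (d := b) (n := 2 * (a + b) + 2) (by omega)
      (by omega) (by omega) (by omega)
    obtain ⟨k₃, e₃⟩ := pathCoeff_odd (e := a + b) (d := c) (n := 2 * (a + b) + 2) (by omega)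
      (by omega) (by omega) (by omega)
    obtain ⟨k₄, e₄⟩ := pathCoeff_even (e := b' + c') (d := a') (n := 2 * (a + b) + 2) (by omega)
      (by omega) (by omega) (by omega)
    obtain ⟨k₅, e₅⟩ := pathCoeff_even (e := a' + c') (d := b') (n := 2 * (a + b) + 2) (by omega)
      (by omega) (by omega) (by omega)
    obtain ⟨k₆, e₆⟩ := pathCoeff_even (e := a' + b') (d := c') (n := 2 * (a + b) + 2) (by omega)
      (by omega) (by omega) (by omega)
    omega
  · have H := coeff_thetaPoly_eq h (a + c + c + 4 + a)
    rw [pathCoeff_high, pathCoeff_high, pathCoeff_high, pathCoeff_high,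
      pathCoeff_high] at H
    all_goals omega

/-- If `a' < a`, the coefficient of `X ^ (m + 4 + a)`, with `m = a + b + c`, separates the two
polynomials once the equal contributions of `c` are cancelled: it is at least `2` on the left and
zero on the right. -/
lemma longest_le {a b c a' b' : ℕ} (hc : 1 ≤ c) (hcb : c ≤ b) (hba : b ≤ a)
    (hcb' : c ≤ b') (hba' : b' ≤ a') (hm : a + b + c = a' + b' + c)
    (h : thetaPoly a b c = thetaPoly a' b' c) : a ≤ a' := by
  by_contra! hlt
  have H := coeff_thetaPoly_eq h (a + b + c + 4 + a)
  rw [show a' + b' = a + b by omega, add_left_inj, pathCoeff_high, pathCoeff_high, pathCoeff_high,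
    pathCoeff_high] at H
  all_goals omega

/-- **No two non-isomorphic theta graphs are L-cospectral.** -/
theorem theta_lapCospectral_eq (r s t r' s' t' : ℕ)
    (hts : t ≤ s) (hsr : s ≤ r) (hst : (s, t) ≠ (0, 0))
    (hts' : t' ≤ s') (hsr' : s' ≤ r') (hst' : (s', t') ≠ (0, 0))
    (hcospectral :
      ((thetaGraph r s t).lapMatrix ℚ).charpoly =
        ((thetaGraph r' s' t').lapMatrix ℚ).charpoly) :
    (r, s, t) = (r', s', t') ∧
      Nonempty (thetaGraph r s t ≃g thetaGraph r' s' t') := by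
  have hs : s ≠ 0 := by
    rintro rfl
    exact hst (by simpa using hts)
  have hs' : s' ≠ 0 := by
    rintro rfl
    exact hst' (by simpa using hts')
  have hm : r + s + t = r' + s' + t' := by
    have h := congrArg Polynomial.natDegree hcospectral
    simpa [Matrix.charpoly_natDegree_eq_dim] using h
  have h := thetaPoly_eq_of_charpoly_eq (by omega) hs (by omega) hs' hm hcospectral
  have ht : t = t' := by
    have h₁ := shortest_le (by omega) (by omega) (by omega) (by omega) (by omega) (by omega)
      (by omega) h
    have h₂ := shortest_le (by omega) (by omega) (by omega) (by omega) (by omega) (by omega)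
      (by omega) h.symm
    omega
  subst ht
  have hr : r = r' := by
    have h₁ := longest_le (by omega) (by omega) (by omega) (by omega) (by omega) (by omega) h
    have h₂ := longest_le (by omega) (by omega) (by omega) (by omega) (by omega) (by omega) h.symm
    omega
  subst hr
  obtain rfl : s = s' := by omega
  exact ⟨rfl, ⟨SimpleGraph.Iso.refl⟩⟩
end

section
/- Let 𝔅 be the class of all graphs isomorphic to a dumbbell graph or to a theta graph. If G is a dumbbell graph or a theta graph and G' is a finite simple graph whose Laplacian matrix has the same characteristic polynomial as the Laplacian matrix of G, then G' is isomorphic to some dumbbell graph or to some theta graph. -/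
/-!
The Laplacian spectrum of a graph determines its order, the sums of the degrees and of the squares
of the degrees (from the traces of `L` and `L ^ 2`), and the number of components (the nullity of
`L`). A dumbbell or theta graph is connected with two vertices of degree `3` and all others of
degree `2`. In terms of the excess `e = d - 2` this says `∑ e = ∑ e ^ 2 = 2`, and conversely these
two equations give `∑ e * (e - 1) = 0`, a sum of nonnegative integers, so that `e` is `0` or `1`
everywhere and `1` exactly twice. Hence a graph cospectral with a dumbbell or theta graph is again
connected with degrees `3, 3, 2, …, 2` (`IsBicyclicCore.of_charpoly_eq`).

It remains to classify such graphs (`IsBicyclicCore.classification`). Let `u`, `v` be the vertices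
of degree `3`. Every edge at `u` or `v` starts a unique thread, a non-backtracking walk through
vertices of degree `2` up to the next vertex of degree `3` (`exists_thread`), and two threads with
a common interior vertex agree up to reversal (`IsThread.meet`). If no thread is closed at `u`, the
three threads at `u` all end at `v` and form a theta graph; likewise with `u` and `v` exchanged.
Otherwise there are closed threads at both `u` and `v`, and the third edge at `u` starts a thread
to `v` (`IsThread.last_of_closed`), which gives a dumbbell. In both cases the threads define an
injective homomorphism from the model graph which matches degrees, and such a map into a connected
graph is an isomorphism (`nonempty_iso_of_injective`).
-/

open Polynomial Matrix SimpleGraph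
open scoped Classical

/-! ### Spectral invariants -/

section Spectral

variable {V W : Type*} [Fintype V] [Fintype W] [DecidableEq V] [DecidableEq W]

theorem trace_mul_self_eq_sum_eigenvalues_sq {A : Matrix V V ℝ} (hA : A.IsHermitian) :
    (A * A).trace = ∑ i, hA.eigenvalues i ^ 2 := by
  have h := hA.spectral_theorem
  rw [Unitary.conjStarAlgAut_apply] at h
  set U : Matrix V V ℝ := (hA.eigenvectorUnitary : Matrix V V ℝ)
  have hU : star U * U = 1 := Unitary.coe_star_mul_self hA.eigenvectorUnitary
  set D : Matrix V V ℝ := diagonal (RCLike.ofReal ∘ hA.eigenvalues) with hD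
  have : A * A = U * (D * D) * star U := by
    calc A * A = (U * D * star U) * (U * D * star U) := by rw [← h]
      _ = U * D * (star U * U) * D * star U := by simp only [Matrix.mul_assoc]
      _ = _ := by rw [hU]; simp only [Matrix.mul_assoc, Matrix.mul_one]
  rw [this, Matrix.trace_mul_comm, ← Matrix.mul_assoc, hU, Matrix.one_mul, hD,
    Matrix.diagonal_mul_diagonal, Matrix.trace_diagonal]
  simp [sq]

/-- The sum of a function over the eigenvalues depends only on the characteristic polynomial. The
index types may differ; that they have equal size is the case of a constant function. -/
theorem sum_map_eigenvalues_eq {A : Matrix V V ℝ} {B : Matrix W W ℝ} (hA : A.IsHermitian)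
    (hB : B.IsHermitian) (h : A.charpoly = B.charpoly) (f : ℝ → ℝ) :
    ∑ i, f (hA.eigenvalues i) = ∑ i, f (hB.eigenvalues i) := by
  have h1 := hA.roots_charpoly_eq_eigenvalues
  rw [h, hB.roots_charpoly_eq_eigenvalues] at h1
  have := congrArg (fun m => (Multiset.map f m).sum) h1
  simpa [Multiset.map_map] using this.symm

/-- The nullity of a Hermitian matrix as a sum over its eigenvalues, so that it is covered by
`sum_map_eigenvalues_eq`. -/
theorem finrank_ker_eq_sum {A : Matrix V V ℝ} (hA : A.IsHermitian) :
    (Module.finrank ℝ (LinearMap.ker A.toLin') : ℝ) =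
      ∑ i, if hA.eigenvalues i = 0 then 1 else 0 := by
  have h1 := A.toLin'.finrank_range_add_finrank_ker
  have h2 : A.rank = Module.finrank ℝ (LinearMap.range A.toLin') := rfl
  rw [← h2, hA.rank_eq_card_non_zero_eigs, Fintype.card_subtype,
    Module.finrank_fintype_fun_eq_card] at h1
  have h3 := Finset.card_filter_add_card_filter_not (s := (Finset.univ : Finset V))
    (fun i => hA.eigenvalues i = 0)
  rw [Finset.card_univ] at h3
  rw [Finset.sum_boole]
  norm_cast
  simp only [ne_eq] at h1
  omega

theorem lapMatrix_trace (G : SimpleGraph V) : (G.lapMatrix ℝ).trace = ∑ v, (G.degree v : ℝ) := by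
  simp [SimpleGraph.lapMatrix, SimpleGraph.degMatrix]

theorem lapMatrix_trace_sq (G : SimpleGraph V) :
    (G.lapMatrix ℝ * G.lapMatrix ℝ).trace = ∑ v, ((G.degree v : ℝ) ^ 2 + G.degree v) := by
  have h1 : (G.degMatrix ℝ * G.adjMatrix ℝ).trace = 0 := by
    simp only [SimpleGraph.degMatrix, Matrix.trace, Matrix.diag, Matrix.diagonal_mul]
    simp
  have h2 : (G.adjMatrix ℝ * G.degMatrix ℝ).trace = 0 := by rw [Matrix.trace_mul_comm, h1]
  have h3 : (G.degMatrix ℝ * G.degMatrix ℝ).trace = ∑ v, (G.degree v : ℝ) ^ 2 := by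
    simp [SimpleGraph.degMatrix, Matrix.trace_diagonal, sq]
  have h4 : (G.adjMatrix ℝ * G.adjMatrix ℝ).trace = ∑ v, (G.degree v : ℝ) := by
    simp only [Matrix.trace, Matrix.diag, SimpleGraph.adjMatrix_mul_self_apply_self]
  rw [SimpleGraph.lapMatrix, Matrix.sub_mul, Matrix.mul_sub, Matrix.mul_sub, Matrix.trace_sub,
    Matrix.trace_sub, Matrix.trace_sub, h1, h2, h3, h4, Finset.sum_add_distrib]
  ring

/-- The spectral theorem is applied over `ℝ`, while cospectrality is given over `ℚ`. -/
theorem lapMatrix_map_cast (G : SimpleGraph V) :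
    (G.lapMatrix ℚ).map (algebraMap ℚ ℝ) = G.lapMatrix ℝ := by
  ext i j
  simp only [SimpleGraph.lapMatrix, SimpleGraph.degMatrix, Matrix.map_apply, Matrix.sub_apply,
    Matrix.diagonal_apply, SimpleGraph.adjMatrix_apply]
  split_ifs <;> simp

/-- A connected graph with exactly two vertices of degree `3` and all other vertices of degree `2`.
These are the connected bicyclic graphs without vertices of degree `1` or `4`. -/
def IsBicyclicCore (G : SimpleGraph V) : Prop :=
  G.Connected ∧ ∃ u v : V, u ≠ v ∧ G.degree u = 3 ∧ G.degree v = 3 ∧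
    ∀ w, w ≠ u → w ≠ v → G.degree w = 2

theorem connected_iff_card (G : SimpleGraph V) :
    G.Connected ↔ Fintype.card G.ConnectedComponent = 1 := by
  rw [Fintype.card_eq_one_iff_nonempty_unique]
  constructor
  · intro h
    have := h.nonempty
    have h2 := h.preconnected.subsingleton_connectedComponent
    obtain ⟨x⟩ := this
    exact ⟨⟨⟨G.connectedComponentMk x⟩, fun y => Subsingleton.elim _ _⟩⟩
  · rintro ⟨h⟩
    have := h.default
    obtain ⟨x, -⟩ := this.exists_rep
    have : Nonempty V := ⟨x⟩
    refine ⟨fun a b => ?_⟩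
    exact SimpleGraph.ConnectedComponent.exact (Subsingleton.elim _ _)

/-- The power sums `∑ d` and `∑ d ^ 2` of the degree sequence `3, 3, 2, …, 2` determine it, up to
order, among all sequences of natural numbers of the same length. -/
theorem exists_two_of_sums {d : V → ℕ} (h1 : ∑ v, (d v : ℝ) = ∑ _v : V, 2 + 2)
    (h2 : ∑ v, (d v : ℝ) ^ 2 = ∑ _v : V, 4 + 10) :
    ∃ u v : V, u ≠ v ∧ d u = 3 ∧ d v = 3 ∧ ∀ w, w ≠ u → w ≠ v → d w = 2 := by
  have e1 : ∑ v, ((d v : ℤ) - 2) = 2 := by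
    have : ∑ v, ((d v : ℝ) - 2) = 2 := by rw [Finset.sum_sub_distrib, h1]; ring
    exact_mod_cast this
  have e2 : ∑ v, ((d v : ℤ) - 2) ^ 2 = 2 := by
    have : ∑ v, ((d v : ℝ) - 2) ^ 2 = 2 := by
      have : ∀ v, ((d v : ℝ) - 2) ^ 2 = (d v : ℝ) ^ 2 - 4 * d v + 4 := fun v => by ring
      simp only [this, Finset.sum_add_distrib, Finset.sum_sub_distrib, ← Finset.mul_sum, h1, h2]
      simp; ring
    exact_mod_cast this
  -- `e * (e - 1)` is a nonnegative integer summing to zero, so every excess `e` is `0` or `1`.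
  have e3 : ∑ v, ((d v : ℤ) - 2) * ((d v : ℤ) - 3) = 0 := by
    have : ∀ v, ((d v : ℤ) - 2) * ((d v : ℤ) - 3) = ((d v : ℤ) - 2) ^ 2 - ((d v : ℤ) - 2) :=
      fun v => by ring
    simp only [this, Finset.sum_sub_distrib]
    rw [Finset.sum_sub_distrib] at e1
    linarith
  have pos : ∀ v ∈ Finset.univ, 0 ≤ ((d v : ℤ) - 2) * ((d v : ℤ) - 3) := by
    intro v _
    rcases le_or_gt (d v : ℤ) 2 with h | h
    · nlinarith
    · nlinarith
  have e4 := (Finset.sum_eq_zero_iff_of_nonneg pos).1 e3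
  have e5 : ∀ v, d v = 2 ∨ d v = 3 := by
    intro v
    rcases mul_eq_zero.1 (e4 v (Finset.mem_univ v)) with h | h <;> omega
  have e6 : (Finset.univ.filter fun v => d v = 3).card = 2 := by
    have : ∀ v, ((d v : ℤ) - 2) = if d v = 3 then 1 else 0 := by
      intro v
      rcases e5 v with h | h <;> simp [h]
    simp only [this, Finset.sum_boole] at e1
    exact_mod_cast e1
  obtain ⟨u, v, huv, hs⟩ := Finset.card_eq_two.1 e6
  have hm : ∀ w, d w = 3 ↔ w = u ∨ w = v := by
    intro w
    have : w ∈ (Finset.univ.filter fun v => d v = 3) ↔ w ∈ ({u, v} : Finset V) := by rw [hs]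
    simpa using this
  refine ⟨u, v, huv, (hm u).2 (Or.inl rfl), (hm v).2 (Or.inr rfl), fun w h1 h2 => ?_⟩
  rcases e5 w with h | h
  · exact h
  · exact absurd ((hm w).1 h) (by tauto)

/-- Evaluates `∑ f (d v)` for the degree sequence `3, 3, 2, …, 2`; used for `f` the identity and
the square. -/
theorem sum_of_exists_two {d : V → ℕ}
    (h : ∃ u v : V, u ≠ v ∧ d u = 3 ∧ d v = 3 ∧ ∀ w, w ≠ u → w ≠ v → d w = 2) (f : ℕ → ℝ) :
    ∑ v, f (d v) = ∑ _v : V, f 2 + 2 * (f 3 - f 2) := by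
  obtain ⟨u, v, huv, hu, hv, hw⟩ := h
  have : ∀ w, f (d w) = f 2 +
      ((if w = u then f 3 - f 2 else 0) + (if w = v then f 3 - f 2 else 0)) := by
    intro w
    by_cases h1 : w = u
    · subst h1; simp [huv, hu]
    · by_cases h2 : w = v
      · subst h2; simp [h1, hv]
      · simp [h1, h2, hw w h1 h2]
  simp only [this, Finset.sum_add_distrib]
  simp; ring

/-- Being connected with degrees `3, 3, 2, …, 2` is determined by the Laplacian spectrum. -/
theorem IsBicyclicCore.of_charpoly_eq {G : SimpleGraph V} {H : SimpleGraph W}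
    (hH : IsBicyclicCore H) (h : (G.lapMatrix ℚ).charpoly = (H.lapMatrix ℚ).charpoly) :
    IsBicyclicCore G := by
  have hR : (G.lapMatrix ℝ).charpoly = (H.lapMatrix ℝ).charpoly := by
    rw [← lapMatrix_map_cast, ← lapMatrix_map_cast, Matrix.charpoly_map, Matrix.charpoly_map, h]
  have hG' : (G.lapMatrix ℝ).IsHermitian := G.isHermitian_lapMatrix ℝ
  have hH' : (H.lapMatrix ℝ).IsHermitian := H.isHermitian_lapMatrix ℝ
  have key := sum_map_eigenvalues_eq hG' hH' hR
  have c0 : ∀ c : ℝ, ∑ _v : V, c = ∑ _v : W, c := fun c => key fun _ => c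
  have c1 : ∑ v, (G.degree v : ℝ) = ∑ v, (H.degree v : ℝ) := by
    rw [← lapMatrix_trace, ← lapMatrix_trace, hG'.trace_eq_sum_eigenvalues,
      hH'.trace_eq_sum_eigenvalues]
    exact key fun x => x
  have c2 : ∑ v, (G.degree v : ℝ) ^ 2 = ∑ v, (H.degree v : ℝ) ^ 2 := by
    have := key fun x => x ^ 2
    rw [← trace_mul_self_eq_sum_eigenvalues_sq, ← trace_mul_self_eq_sum_eigenvalues_sq,
      lapMatrix_trace_sq, lapMatrix_trace_sq, Finset.sum_add_distrib, Finset.sum_add_distrib,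
      c1] at this
    linarith
  have c3 : Fintype.card G.ConnectedComponent = Fintype.card H.ConnectedComponent := by
    have := key fun x => if x = 0 then 1 else 0
    rw [← finrank_ker_eq_sum hG', ← finrank_ker_eq_sum hH',
      ← card_connectedComponent_eq_finrank_ker_toLin'_lapMatrix,
      ← card_connectedComponent_eq_finrank_ker_toLin'_lapMatrix] at this
    exact_mod_cast this
  refine ⟨(connected_iff_card G).2 (c3.trans ((connected_iff_card H).1 hH.1)), ?_⟩
  apply exists_two_of_sums
  · rw [c1, sum_of_exists_two hH.2 (fun n => (n : ℝ)), c0]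
    norm_num
  · rw [c2, sum_of_exists_two hH.2 (fun n => (n : ℝ) ^ 2), c0]
    norm_num

end Spectral

/-! ### Dumbbell and theta graphs -/

section Models

/-- A graph is connected if every vertex other than the root has a neighbour of smaller rank. -/
theorem connected_of_parent {n : ℕ} {G : SimpleGraph (Fin n)} (root : Fin n) (rank : ℕ → ℕ)
    (h : ∀ i : Fin n, i ≠ root → ∃ j : Fin n, G.Adj i j ∧ rank j < rank i) : G.Connected := by
  rw [SimpleGraph.connected_iff_exists_forall_reachable]
  refine ⟨root, ?_⟩
  have : ∀ k, ∀ i : Fin n, rank i = k → G.Reachable root i := by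
    intro k
    induction k using Nat.strong_induction_on with
    | _ k ih =>
      intro i hi
      by_cases hr : i = root
      · rw [hr]
      · obtain ⟨j, hj, hlt⟩ := h i hr
        exact (ih _ (hi ▸ hlt) j rfl).trans hj.symm.reachable
  exact fun w => this _ w rfl

theorem dumbbell_adj {p k q : ℕ} (a b : Fin (p + q + k)) : (dumbbellGraph p k q).Adj a b ↔
    (a : ℕ) ≠ b ∧ (dumbbellRel p k q a b ∨ dumbbellRel p k q b a) := by
  simp [dumbbellGraph, SimpleGraph.fromRel_adj, Fin.ext_iff]

theorem theta_adj {r s t : ℕ} (a b : Fin (r + s + t + 2)) : (thetaGraph r s t).Adj a b ↔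
    (a : ℕ) ≠ b ∧ ((thetaBlockRel (r + s + t + 1) 1 r a b ∨
    thetaBlockRel (r + s + t + 1) (r + 1) s a b ∨
    thetaBlockRel (r + s + t + 1) (r + s + 1) t a b) ∨
    (thetaBlockRel (r + s + t + 1) 1 r b a ∨
    thetaBlockRel (r + s + t + 1) (r + 1) s b a ∨
    thetaBlockRel (r + s + t + 1) (r + s + 1) t b a)) := by
  simp [thetaGraph, SimpleGraph.fromRel_adj, Fin.ext_iff]

theorem degree_eq_two_of {n : ℕ} {G : SimpleGraph (Fin n)} {i : Fin n} (a b : ℕ) (ha : a < n)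
    (hb : b < n) (hab : a ≠ b) (h : ∀ j : Fin n, G.Adj i j ↔ (j : ℕ) = a ∨ (j : ℕ) = b) :
    G.degree i = 2 := by
  have : G.neighborFinset i = {⟨a, ha⟩, ⟨b, hb⟩} := by
    ext j
    simp [h, Fin.ext_iff]
  rw [← SimpleGraph.card_neighborFinset_eq_degree, this, Finset.card_pair]
  simpa [Fin.ext_iff] using hab

theorem degree_eq_three_of {n : ℕ} {G : SimpleGraph (Fin n)} {i : Fin n} (a b c : ℕ) (ha : a < n)
    (hb : b < n) (hc : c < n) (hab : a ≠ b) (hac : a ≠ c) (hbc : b ≠ c)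
    (h : ∀ j : Fin n, G.Adj i j ↔ (j : ℕ) = a ∨ (j : ℕ) = b ∨ (j : ℕ) = c) :
    G.degree i = 3 := by
  have : G.neighborFinset i = {⟨a, ha⟩, ⟨b, hb⟩, ⟨c, hc⟩} := by
    ext j
    simp [h, Fin.ext_iff]
  rw [← SimpleGraph.card_neighborFinset_eq_degree, this, Finset.card_eq_three]
  exact ⟨_, _, _, by simpa using hab, by simpa using hac, by simpa using hbc, rfl⟩

theorem dumbbell_degree_zero {p k q : ℕ} (hq : 3 ≤ q) (hp : 3 ≤ p) :
    (dumbbellGraph p k q).degree ⟨0, by omega⟩ = 3 := by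
  apply degree_eq_three_of 1 (p - 1) (if k = 0 then p else p + q)
  case h =>
    intro j
    have := j.2
    rw [dumbbell_adj]
    obtain ⟨j, hj⟩ := j
    simp only [dumbbellRel] at *
    grind (splits := 30)
  all_goals (try split_ifs) <;> omega

theorem dumbbell_degree_p {p k q : ℕ} (hq : 3 ≤ q) (hp : 3 ≤ p) :
    (dumbbellGraph p k q).degree ⟨p, by omega⟩ = 3 := by
  apply degree_eq_three_of (p + 1) (p + q - 1) (if k = 0 then 0 else p + q + k - 1)
  case h =>
    intro j
    have := j.2
    rw [dumbbell_adj]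
    obtain ⟨j, hj⟩ := j
    simp only [dumbbellRel] at *
    grind (splits := 30)
  all_goals (try split_ifs) <;> omega

theorem dumbbell_degree_other {p k q : ℕ} (hq : 3 ≤ q) (hp : 3 ≤ p) (i : Fin (p + q + k))
    (h0 : (i : ℕ) ≠ 0) (h1 : (i : ℕ) ≠ p) : (dumbbellGraph p k q).degree i = 2 := by
  have hi := i.2
  apply degree_eq_two_of (if (i : ℕ) = p + q then 0 else i - 1)
    (if (i : ℕ) + 1 = p then 0 else if (i : ℕ) + 1 = p + q then p else
      if (i : ℕ) + 1 = p + q + k then p else i + 1)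
  case h =>
    intro j
    have := j.2
    rw [dumbbell_adj]
    obtain ⟨j, hj⟩ := j
    obtain ⟨i, hi⟩ := i
    simp only [dumbbellRel] at *
    grind (splits := 30)
  all_goals split_ifs <;> omega

theorem dumbbell_isBicyclicCore {p k q : ℕ} (hq : 3 ≤ q) (hp : 3 ≤ p) :
    IsBicyclicCore (dumbbellGraph p k q) := by
  -- The cycle at `p` comes after the connecting path, so its vertices are shifted to larger ranks
  -- than those of the path.
  refine ⟨connected_of_parent ⟨0, by omega⟩
    (fun i => if i < p then i else if i < p + q then i + k + q else i) ?_, ⟨0, by omega⟩,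
    ⟨p, by omega⟩, by rw [Ne, Fin.mk.injEq]; omega,
    dumbbell_degree_zero hq hp, dumbbell_degree_p hq hp, fun w h1 h2 =>
      dumbbell_degree_other hq hp w (fun h => h1 (Fin.ext h))
        (fun h => h2 (Fin.ext h))⟩
  intro i hi
  have hi' := i.2
  have h0 : (i : ℕ) ≠ 0 := fun h => hi (Fin.ext h)
  refine ⟨⟨if (i : ℕ) = p then (if k = 0 then 0 else p + q + k - 1)
    else if (i : ℕ) = p + q then 0 else i - 1, by split_ifs <;> omega⟩, ?_, ?_⟩
  · rw [dumbbell_adj]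
    obtain ⟨i, hi'⟩ := i
    simp only [dumbbellRel] at *
    grind (splits := 30)
  · simp only
    split_ifs <;> omega

theorem theta_degree_zero {r s t : ℕ} (hts : t ≤ s) (hsr : s ≤ r) (hs : 1 ≤ s) :
    (thetaGraph r s t).degree ⟨0, by omega⟩ = 3 := by
  apply degree_eq_three_of 1 (r + 1) (r + s + 1)
  case h =>
    intro j
    have := j.2
    rw [theta_adj]
    obtain ⟨j, hj⟩ := j
    simp only [thetaBlockRel] at *
    grind (splits := 30)
  all_goals omega

theorem theta_degree_last {r s t : ℕ} (hts : t ≤ s) (hsr : s ≤ r) (hs : 1 ≤ s) :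
    (thetaGraph r s t).degree ⟨r + s + t + 1, by omega⟩ = 3 := by
  apply degree_eq_three_of r (r + s) (if t = 0 then 0 else r + s + t)
  case h =>
    intro j
    have := j.2
    rw [theta_adj]
    obtain ⟨j, hj⟩ := j
    simp only [thetaBlockRel] at *
    grind (splits := 30)
  all_goals (try split_ifs) <;> omega

theorem theta_degree_other {r s t : ℕ} (hts : t ≤ s) (hsr : s ≤ r) (hs : 1 ≤ s)
    (i : Fin (r + s + t + 2)) (h0 : (i : ℕ) ≠ 0) (h1 : (i : ℕ) ≠ r + s + t + 1) :
    (thetaGraph r s t).degree i = 2 := by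
  have hi := i.2
  apply degree_eq_two_of (if (i : ℕ) = r + 1 ∨ (i : ℕ) = r + s + 1 then 0 else i - 1)
    (if (i : ℕ) = r ∨ (i : ℕ) = r + s then r + s + t + 1 else i + 1)
  case h =>
    intro j
    have := j.2
    rw [theta_adj]
    obtain ⟨j, hj⟩ := j
    obtain ⟨i, hi⟩ := i
    simp only [thetaBlockRel] at *
    grind (splits := 30)
  all_goals split_ifs <;> omega

theorem theta_isBicyclicCore {r s t : ℕ} (hts : t ≤ s) (hsr : s ≤ r) (hs : 1 ≤ s) :
    IsBicyclicCore (thetaGraph r s t) := by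
  refine ⟨connected_of_parent ⟨0, by omega⟩ id ?_, ⟨0, by omega⟩,
    ⟨r + s + t + 1, by omega⟩, by rw [Ne, Fin.mk.injEq]; omega,
    theta_degree_zero hts hsr hs, theta_degree_last hts hsr hs, fun w h1 h2 =>
      theta_degree_other hts hsr hs w (fun h => h1 (Fin.ext h))
        (fun h => h2 (Fin.ext h))⟩
  intro i hi
  have hi' := i.2
  have h0 : (i : ℕ) ≠ 0 := fun h => hi (Fin.ext h)
  refine ⟨⟨if (i : ℕ) = r + s + t + 1 then r else
    if (i : ℕ) = r + 1 ∨ (i : ℕ) = r + s + 1 then 0 else i - 1, by split_ifs <;> omega⟩, ?_, ?_⟩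
  · rw [theta_adj]
    obtain ⟨i, hi'⟩ := i
    simp only [thetaBlockRel] at *
    grind (splits := 30)
  · simp only [id]
    split_ifs <;> omega

end Models

/-! ### Threads between vertices of degree three -/

section Threads

variable {V : Type*} [Fintype V] [DecidableEq V] {G : SimpleGraph V}

theorem eq_or_eq_of_degree_two {w a b c : V} (hw : G.degree w = 2) (ha : G.Adj w a)
    (hb : G.Adj w b) (hab : a ≠ b) (hc : G.Adj w c) : c = a ∨ c = b := by
  have hs : ({a, b} : Finset V) = G.neighborFinset w := by
    apply Finset.eq_of_subset_of_card_le
    · intro x hx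
      simp only [Finset.mem_insert, Finset.mem_singleton] at hx
      rcases hx with rfl | rfl <;> simpa
    · rw [SimpleGraph.card_neighborFinset_eq_degree, hw, Finset.card_pair hab]
  have : c ∈ ({a, b} : Finset V) := by rw [hs]; simpa
  simpa using this

/-- A thread of length `m`: a non-backtracking walk `x 0, …, x m` whose ends have degree `3` and
whose interior vertices have degree `2`. The walk is encoded as a sequence on `ℕ`, of which only
the values up to `m` matter; the ends may coincide. -/
structure IsThread (G : SimpleGraph V) (x : ℕ → V) (m : ℕ) : Prop where
  /-- A thread contains at least one edge. -/
  pos : 0 < m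
  adj : ∀ i < m, G.Adj (x i) (x (i + 1))
  /-- The walk does not backtrack. -/
  nb : ∀ i, i + 2 ≤ m → x i ≠ x (i + 2)
  start : G.degree (x 0) = 3
  inner : ∀ i, 0 < i → i < m → G.degree (x i) = 2
  last : G.degree (x m) = 3

theorem IsThread.reverse {x : ℕ → V} {m : ℕ} (h : IsThread G x m) :
    IsThread G (fun i => x (m - i)) m where
  pos := h.pos
  adj i hi := by
    have := h.adj (m - (i + 1)) (by omega)
    rw [show m - (i + 1) + 1 = m - i by omega] at this
    exact this.symm
  nb i hi := by
    have := h.nb (m - (i + 2)) (by omega)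
    rw [show m - (i + 2) + 2 = m - i by omega] at this
    exact this.symm
  start := h.last
  inner i hi hi' := h.inner _ (by omega) (by omega)
  last := by rw [Nat.sub_self]; exact h.start

theorem IsThread.next {x : ℕ → V} {m : ℕ} (h : IsThread G x m) {i : ℕ} (h0 : 0 < i) (hi : i < m)
    {c : V} (hc : G.Adj (x i) c) : c = x (i - 1) ∨ c = x (i + 1) := by
  obtain ⟨i, rfl⟩ : ∃ k, i = k + 1 := ⟨i - 1, by omega⟩
  exact eq_or_eq_of_degree_two (h.inner _ h0 hi) (h.adj i (by omega)).symm (h.adj _ hi)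
    (h.nb i (by omega)) hc

/-- Two threads that traverse a common edge in the same direction do so at the same time and have
the same first edge: tracing back through vertices of degree `2` is deterministic, and both threads
reach their start at the first vertex of degree `3`. -/
theorem IsThread.start_eq_of_step {x y : ℕ → V} {m l : ℕ} (hx : IsThread G x m)
    (hy : IsThread G y l) : ∀ i j, i < m → j < l → x (i + 1) = y (j + 1) → x i = y j →
      i = j ∧ x 0 = y 0 ∧ x 1 = y 1 := by
  intro i
  induction i with
  | zero =>
    intro j hi hj h1 h0
    rcases Nat.eq_zero_or_pos j with rfl | hj0
    · exact ⟨rfl, h0, h1⟩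
    · have := hy.inner j hj0 hj
      rw [← h0, hx.start] at this
      omega
  | succ i ih =>
    intro j hi hj h1 h0
    rcases Nat.eq_zero_or_pos j with rfl | hj0
    · have := hx.inner (i + 1) (by omega) hi
      rw [h0, hy.start] at this
      omega
    · obtain ⟨j, rfl⟩ : ∃ k, j = k + 1 := ⟨j - 1, by omega⟩
      have h2 : x i = y j := by
        have hadj := (hx.adj i (by omega)).symm
        rw [h0] at hadj
        rcases hy.next hj0 hj hadj with h | h
        · simpa using h
        · exact absurd (h.trans h1.symm) (hx.nb i (by omega))
      obtain ⟨h3, h4⟩ := ih j (by omega) (by omega) h0 h2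
      exact ⟨by omega, h4⟩

/-- Two threads with a common interior vertex either start with the same edge or are mutually
reverse, according to the directions in which they pass that vertex. -/
theorem IsThread.meet {x y : ℕ → V} {m l : ℕ} (hx : IsThread G x m) (hy : IsThread G y l)
    {i j : ℕ} (hi0 : 0 < i) (hi : i < m) (hj0 : 0 < j) (hj : j < l) (h : x i = y j) :
    (i = j ∧ x 0 = y 0 ∧ x 1 = y 1 ∧ x m = y l) ∨
    (i + j = l ∧ i + j = m ∧ x 0 = y l ∧ x 1 = y (l - 1) ∧ x m = y 0 ∧ x (m - 1) = y 1) := by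
  have hxp : G.Adj (y j) (x (i - 1)) := by
    have := (hx.adj (i - 1) (by omega)).symm
    rwa [show i - 1 + 1 = i by omega, h] at this
  have hxn : G.Adj (y j) (x (i + 1)) := by
    have := hx.adj i hi
    rwa [h] at this
  have hne : x (i - 1) ≠ x (i + 1) := by
    have := hx.nb (i - 1) (by omega)
    rwa [show i - 1 + 2 = i + 1 by omega] at this
  -- The vertex before `x i` on the first thread is the one before or the one after `y j` on the
  -- second, which decides whether the threads run in the same or in opposite directions.
  rcases hy.next hj0 hj hxp with h1 | h1
  · left
    have := hx.start_eq_of_step hy (i - 1) (j - 1) (by omega) (by omega)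
      (by rwa [show i - 1 + 1 = i by omega, show j - 1 + 1 = j by omega]) h1
    have h2 : x (i + 1) = y (j + 1) := by
      rcases hy.next hj0 hj hxn with h2 | h2
      · exact absurd (h1.trans h2.symm) hne
      · exact h2
    have b := hx.reverse.start_eq_of_step hy.reverse (m - i - 1) (l - j - 1) (by omega) (by omega)
      (by rw [show m - (m - i - 1 + 1) = i by omega, show l - (l - j - 1 + 1) = j by omega, h])
      (by rw [show m - (m - i - 1) = i + 1 by omega, show l - (l - j - 1) = j + 1 by omega, h2])
    exact ⟨by omega, this.2.1, this.2.2, b.2.1⟩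
  · right
    have h2 : x (i + 1) = y (j - 1) := by
      rcases hy.next hj0 hj hxn with h2 | h2
      · exact h2
      · exact absurd (h1.trans h2.symm) hne
    have a := hx.start_eq_of_step hy.reverse (i - 1) (l - j - 1) (by omega) (by omega)
      (by rw [show i - 1 + 1 = i by omega]
          rw [show l - (l - j - 1 + 1) = j by omega, h])
      (by rw [show l - (l - j - 1) = j + 1 by omega, h1])
    have b := hx.reverse.start_eq_of_step hy (m - i - 1) (j - 1) (by omega) (by omega)
      (by rw [show m - (m - i - 1 + 1) = i by omega, show j - 1 + 1 = j by omega, h])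
      (by rw [show m - (m - i - 1) = i + 1 by omega, h2])
    simp only [Nat.sub_zero] at a b
    exact ⟨by omega, by omega, a.2.1, a.2.2, b.2.1, b.2.2⟩

/-- The vertices `x 0, …, x (m - 1)` of a thread are distinct. That `x m` has degree `3` is not
assumed, so the statement also applies to the initial segments of a walk that is not yet known to
return to a vertex of degree `3`. -/
theorem inj_of_inner {x : ℕ → V} {m : ℕ}
    (adj : ∀ i < m, G.Adj (x i) (x (i + 1))) (nb : ∀ i, i + 2 ≤ m → x i ≠ x (i + 2))
    (start : G.degree (x 0) = 3) (inner : ∀ i, 0 < i → i < m → G.degree (x i) = 2) :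
    ∀ i j, i < j → j < m → x i ≠ x j := by
  -- If `x i = x j`, then either `x (i + 1) = x (j - 1)` and the coincidence moves inwards,
  -- or `x (i - 1) = x (j - 1)` and it moves towards the start. Both decrease `j`.
  have nxt : ∀ i, 0 < i → i < m → ∀ c, G.Adj (x i) c → c = x (i - 1) ∨ c = x (i + 1) := by
    intro i h0 hi c hc
    obtain ⟨i, rfl⟩ : ∃ k, i = k + 1 := ⟨i - 1, by omega⟩
    exact eq_or_eq_of_degree_two (inner _ h0 hi) (adj i (by omega)).symm (adj _ hi)
      (nb i (by omega)) hc
  intro i j hij hj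
  induction j using Nat.strong_induction_on generalizing i with
  | _ j ih =>
  intro h
  rcases Nat.eq_zero_or_pos i with rfl | hi0
  · have := inner j hij hj
    rw [← h, start] at this
    omega
  have hadj : G.Adj (x i) (x (j - 1)) := by
    have := (adj (j - 1) (by omega)).symm
    rwa [show j - 1 + 1 = j by omega, ← h] at this
  rcases nxt i hi0 (by omega) _ hadj with h1 | h1
  · exact ih (j - 1) (by omega) (i - 1) (by omega) (by omega) h1.symm
  · rcases lt_trichotomy (i + 1) (j - 1) with h2 | h2 | h2
    · exact ih (j - 1) (by omega) (i + 1) h2 (by omega) h1.symm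
    · exact nb i (by omega) (by rw [h]; congr 1; omega)
    · have h3 := adj i (by omega)
      rw [h] at h3
      by_cases h4 : j = i + 1
      · rw [h4] at h3; exact G.loopless.irrefl _ h3
      · omega

theorem IsThread.inj {x : ℕ → V} {m : ℕ} (h : IsThread G x m) {i j : ℕ} (hi : i < m) (hj : j < m)
    (hij : x i = x j) : i = j := by
  have := inj_of_inner h.adj h.nb h.start h.inner
  rcases lt_trichotomy i j with h1 | h1 | h1
  · exact absurd hij (this i j h1 hj)
  · exact h1
  · exact absurd hij.symm (this j i h1 hi)

/-- Every edge at a vertex of degree `3` starts a thread. -/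
theorem exists_thread (hdeg : ∀ w, G.degree w = 2 ∨ G.degree w = 3) {u a : V}
    (hu : G.degree u = 3) (ha : G.Adj u a) : ∃ x m, IsThread G x m ∧ x 0 = u ∧ x 1 = a := by
  -- `nx p c` is a neighbour of `c` other than `p`: the next vertex after the step from `p` to `c`.
  have hstep : ∀ p c : V, ∃ q, G.Adj c q ∧ q ≠ p := by
    intro p c
    have : 1 < (G.neighborFinset c).card := by
      rw [SimpleGraph.card_neighborFinset_eq_degree]; rcases hdeg c with h | h <;> omega
    obtain ⟨q, hq, hqp⟩ := Finset.exists_mem_ne this p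
    exact ⟨q, by simpa using hq, hqp⟩
  choose nx hnx hnx' using hstep
  let s : ℕ → V × V := fun n => Nat.rec (u, a) (fun _ p => (p.2, nx p.1 p.2)) n
  let x : ℕ → V := fun n => (s n).1
  have hs : ∀ n, (s n).2 = x (n + 1) := fun n => rfl
  have hx2 : ∀ n, x (n + 2) = nx (x n) (x (n + 1)) := fun n => rfl
  have adj : ∀ n, G.Adj (x n) (x (n + 1)) := by
    intro n
    cases n with
    | zero => exact ha
    | succ n => rw [hx2]; exact hnx _ _
  have nb : ∀ n, x n ≠ x (n + 2) := by
    intro n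
    rw [hx2]
    exact (hnx' _ _).symm
  -- A walk that never met degree `3` again would be injective, which is impossible as `V` is finite.
  have hex : ∃ m, 0 < m ∧ G.degree (x m) = 3 := by
    by_contra hcon
    push Not at hcon
    have hin : ∀ i, 0 < i → G.degree (x i) = 2 := fun i hi => by
      rcases hdeg (x i) with h | h
      · exact h
      · exact absurd h (hcon i hi)
    have hinj : Function.Injective x := by
      intro i j hij
      have := fun m => inj_of_inner (x := x) (m := m) (fun i _ => adj i) (fun i _ => nb i) hu
        (fun i hi _ => hin i hi)
      rcases lt_trichotomy i j with h1 | h1 | h1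
      · exact absurd hij (this (j + 1) i j h1 (by omega))
      · exact h1
      · exact absurd hij.symm (this (i + 1) j i h1 (by omega))
    exact not_injective_infinite_finite x hinj
  classical
  refine ⟨x, Nat.find hex, ⟨(Nat.find_spec hex).1, fun i _ => adj i, fun i _ => nb i, hu, ?_,
    (Nat.find_spec hex).2⟩, rfl, rfl⟩
  intro i hi him
  have := Nat.find_min hex him
  rcases hdeg (x i) with h | h
  · exact h
  · exact absurd ⟨hi, h⟩ this

theorem IsThread.three_le {x : ℕ → V} {m : ℕ} (h : IsThread G x m) (hc : x m = x 0) : 3 ≤ m := by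
  have h0 := h.pos
  by_contra hlt
  obtain rfl | rfl : m = 1 ∨ m = 2 := by omega
  · exact (h.adj 0 (by omega)).ne hc.symm
  · exact h.nb 0 (by omega) hc.symm

/-- An injective homomorphism into a connected graph that does not increase degrees is an
isomorphism: it maps neighbourhoods onto neighbourhoods, so its image is closed under adjacency. -/
theorem nonempty_iso_of_injective {W : Type*} [Fintype W] [DecidableEq W] {D : SimpleGraph W}
    (hG : G.Connected) [Nonempty W] (f : W → V) (hf : Function.Injective f)
    (hadj : ∀ a b, D.Adj a b → G.Adj (f a) (f b)) (hdeg : ∀ a, G.degree (f a) ≤ D.degree a) :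
    Nonempty (G ≃g D) := by
  have himg : ∀ a, (D.neighborFinset a).image f = G.neighborFinset (f a) := by
    intro a
    apply Finset.eq_of_subset_of_card_le
    · intro x hx
      obtain ⟨b, hb, rfl⟩ := Finset.mem_image.1 hx
      simpa using hadj a b (by simpa using hb)
    · rw [Finset.card_image_of_injective _ hf]
      simpa using hdeg a
  have hback : ∀ a x, G.Adj (f a) x → ∃ b, D.Adj a b ∧ f b = x := by
    intro a x hx
    have : x ∈ (D.neighborFinset a).image f := by rw [himg]; simpa
    obtain ⟨b, hb, rfl⟩ := Finset.mem_image.1 this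
    exact ⟨b, by simpa using hb, rfl⟩
  have hsurj : Function.Surjective f := by
    intro y
    obtain ⟨a0⟩ := ‹Nonempty W›
    obtain ⟨p⟩ := hG.preconnected (f a0) y
    have : ∀ {a b : V} (p : G.Walk a b), (∃ w, f w = a) → ∃ w, f w = b := by
      intro a b p
      induction p with
      | nil => exact id
      | cons h _ ih =>
        rintro ⟨w, rfl⟩
        obtain ⟨b, -, hb⟩ := hback w _ h
        exact ih ⟨b, hb⟩
    exact this p ⟨a0, rfl⟩
  refine ⟨(SimpleGraph.Iso.symm ⟨Equiv.ofBijective f ⟨hf, hsurj⟩, ?_⟩)⟩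
  intro a b
  constructor
  · intro h
    obtain ⟨c, hc, hcb⟩ := hback a _ h
    rwa [← hf hcb]
  · exact hadj a b

end Threads

/-! ### Classification of graphs with degrees 3, 3, 2, …, 2 -/

section Classification

variable {V : Type*} [Fintype V] [DecidableEq V] {G : SimpleGraph V}

/-- Three threads from `u` to `v` with different first edges exhibit a theta graph. Lengths are one
more than the numbers of interior vertices, which are in the order required of `r, s, t`. -/
theorem iso_theta_of_threads_sorted (hG : G.Connected) {u v : V} (huv : u ≠ v)
    (hu : G.degree u = 3) (hv : G.degree v = 3) (hw : ∀ w, w ≠ u → w ≠ v → G.degree w = 2)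
    {x y z : ℕ → V} {r s t : ℕ} (hx : IsThread G x (r + 1)) (hy : IsThread G y (s + 1))
    (hz : IsThread G z (t + 1)) (hts : t ≤ s) (hsr : s ≤ r) (hx0 : x 0 = u) (hy0 : y 0 = u)
    (hz0 : z 0 = u) (hx1 : x (r + 1) = v) (hy1 : y (s + 1) = v) (hz1 : z (t + 1) = v)
    (hxy : x 1 ≠ y 1) (hxz : x 1 ≠ z 1) (hyz : y 1 ≠ z 1) :
    ∃ r s t : ℕ, t ≤ s ∧ s ≤ r ∧ (s, t) ≠ (0, 0) ∧ Nonempty (G ≃g thetaGraph r s t) := by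
  have hs : 1 ≤ s := by
    rcases Nat.eq_zero_or_pos s with rfl | h
    · obtain rfl : t = 0 := by omega
      exact absurd (hy1.trans hz1.symm) hyz
    · exact h
  refine ⟨r, s, t, hts, hsr, by simp; omega, ?_⟩
  have : Nonempty (Fin (r + s + t + 2)) := ⟨⟨0, by omega⟩⟩
  -- Vertex `0` of the model is `u`, the last one is `v`, and the interiors of the three threads
  -- occupy the blocks in between.
  let f : ℕ → V := fun i =>
    if i ≤ r then x i else if i ≤ r + s then y (i - r) else if i ≤ r + s + t then z (i - (r + s))
    else v
  have f0 : f 0 = u := by simp [f, hx0]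
  have fv : f (r + s + t + 1) = v := by
    simp only [f]; rw [if_neg (by omega), if_neg (by omega), if_neg (by omega)]
  have fx : ∀ i, i ≤ r → f i = x i := fun i hi => if_pos hi
  have fy : ∀ i, 0 < i → i ≤ s → f (r + i) = y i := fun i h0 hi => by
    simp only [f]; rw [if_neg (by omega), if_pos (by omega), Nat.add_sub_cancel_left]
  have fz : ∀ i, 0 < i → i ≤ t → f (r + s + i) = z i := fun i h0 hi => by
    simp only [f]
    rw [if_neg (by omega), if_neg (by omega), if_pos (by omega), Nat.add_sub_cancel_left]
  have nev : ∀ {w : ℕ → V} {m i : ℕ}, IsThread G w (m + 1) → w 0 = u → i ≤ m → w i ≠ v := by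
    intro w m i h h0 hi he
    rcases Nat.eq_zero_or_pos i with rfl | hp
    · exact huv (h0.symm.trans he)
    · have := h.inner i hp (by omega)
      rw [he, hv] at this
      omega
  have disj : ∀ {a b : ℕ → V} {m l i j : ℕ}, IsThread G a (m + 1) → IsThread G b (l + 1) →
      a 0 = u → b 0 = u → b (l + 1) = v → a 1 ≠ b 1 → 0 < j → i ≤ m → j ≤ l → a i ≠ b j := by
    intro a b m l i j ha hb ha0 hb0 hbl hab hj0 hi hj he
    rcases Nat.eq_zero_or_pos i with rfl | hp
    · have := hb.inner j hj0 (by omega)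
      rw [← he, ha0, hu] at this
      omega
    · rcases ha.meet hb hp (by omega) hj0 (by omega) he with h | h
      · exact hab h.2.2.1
      · exact huv (ha0.symm.trans (h.2.2.1.trans hbl))
  have pos : ∀ i, i < r + s + t + 2 → i ≤ r ∨ (∃ k, 0 < k ∧ k ≤ s ∧ i = r + k) ∨
      (∃ k, 0 < k ∧ k ≤ t ∧ i = r + s + k) ∨ i = r + s + t + 1 := by
    intro i hi
    by_cases h1 : i ≤ r
    · exact Or.inl h1
    by_cases h2 : i ≤ r + s
    · exact Or.inr (Or.inl ⟨i - r, by omega, by omega, by omega⟩)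
    by_cases h3 : i ≤ r + s + t
    · exact Or.inr (Or.inr (Or.inl ⟨i - (r + s), by omega, by omega, by omega⟩))
    · exact Or.inr (Or.inr (Or.inr (by omega)))
  have finj : ∀ i j, i < r + s + t + 2 → j < r + s + t + 2 → i < j → f i ≠ f j := by
    intro i j hi hj hij
    rcases pos i hi with h1 | ⟨k, hk0, hk, rfl⟩ | ⟨k, hk0, hk, rfl⟩ | rfl <;>
      rcases pos j hj with h2 | ⟨l, hl0, hl, rfl⟩ | ⟨l, hl0, hl, rfl⟩ | rfl <;> try omega
    · rw [fx _ h1, fx _ h2]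
      exact fun h => by have := hx.inj (by omega) (by omega) h; omega
    · rw [fx _ h1, fy _ hl0 hl]
      exact disj hx hy hx0 hy0 hy1 hxy hl0 h1 hl
    · rw [fx _ h1, fz _ hl0 hl]
      exact disj hx hz hx0 hz0 hz1 hxz hl0 h1 hl
    · rw [fx _ h1, fv]
      exact nev hx hx0 h1
    · rw [fy _ hk0 hk, fy _ hl0 hl]
      exact fun h => by have := hy.inj (by omega) (by omega) h; omega
    · rw [fy _ hk0 hk, fz _ hl0 hl]
      exact disj hy hz hy0 hz0 hz1 hyz hl0 hk hl
    · rw [fy _ hk0 hk, fv]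
      exact nev hy hy0 hk
    · rw [fz _ hk0 hk, fz _ hl0 hl]
      exact fun h => by have := hz.inj (by omega) (by omega) h; omega
    · rw [fz _ hk0 hk, fv]
      exact nev hz hz0 hk
  have finj' : Function.Injective fun i : Fin (r + s + t + 2) => f i := by
    intro i j hij
    rcases lt_trichotomy (i : ℕ) j with h | h | h
    · exact absurd hij (finj i j i.2 j.2 h)
    · exact Fin.ext h
    · exact absurd hij.symm (finj j i j.2 i.2 h)
  have block : ∀ {w : ℕ → V} {L m : ℕ}, IsThread G w (m + 1) → w 0 = u → w (m + 1) = v →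
      (∀ i, 0 < i → i ≤ m → f (L + i) = w i) → ∀ a b,
      thetaBlockRel (r + s + t + 1) (L + 1) m a b → G.Adj (f a) (f b) := by
    intro w L m h h0 hl hf a b hab
    unfold thetaBlockRel at hab
    split_ifs at hab with hm
    · obtain ⟨rfl, rfl⟩ := hab
      subst hm
      rw [f0, fv, ← h0, ← hl]
      exact h.adj 0 (by omega)
    · rcases hab with ⟨rfl, rfl⟩ | ⟨h1, rfl, h2⟩ | ⟨rfl, rfl⟩
      · rw [f0, hf 1 (by omega) (by omega), ← h0]
        exact h.adj 0 (by omega)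
      · obtain ⟨k, rfl⟩ : ∃ k, a = L + k := ⟨a - L, by omega⟩
        rw [hf k (by omega) (by omega), add_assoc, hf (k + 1) (by omega) (by omega)]
        exact h.adj k (by omega)
      · rw [show L + 1 + m - 1 = L + m by omega, hf m (by omega) le_rfl, fv, ← hl]
        exact h.adj m (by omega)
  have hrel : ∀ a b, (thetaBlockRel (r + s + t + 1) 1 r a b ∨
      thetaBlockRel (r + s + t + 1) (r + 1) s a b ∨
      thetaBlockRel (r + s + t + 1) (r + s + 1) t a b) → G.Adj (f a) (f b) := by
    rintro a b (h | h | h)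
    · exact block (L := 0) hx hx0 hx1 (fun i _ hi => by rw [zero_add, fx i hi]) a b h
    · exact block hy hy0 hy1 fy a b h
    · exact block hz hz0 hz1 fz a b h
  refine nonempty_iso_of_injective hG (fun i => f i) finj' ?_ ?_
  · intro a b hab
    rw [theta_adj] at hab
    rcases hab.2 with h | h
    · exact hrel _ _ h
    · exact (hrel _ _ h).symm
  · intro a
    by_cases h0 : (a : ℕ) = 0
    · have e : f a = u := by rw [h0, f0]
      have hd : (thetaGraph r s t).degree a = 3 := by
        rw [show a = ⟨0, by omega⟩ from Fin.ext h0]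
        exact theta_degree_zero hts hsr hs
      rw [e, hd, hu]
    by_cases h1 : (a : ℕ) = r + s + t + 1
    · have e : f a = v := by rw [h1, fv]
      have hd : (thetaGraph r s t).degree a = 3 := by
        rw [show a = ⟨r + s + t + 1, by omega⟩ from Fin.ext h1]
        exact theta_degree_last hts hsr hs
      rw [e, hd, hv]
    · rw [theta_degree_other hts hsr hs a h0 h1]
      refine (hw _ ?_ ?_).le
      · rw [← f0]
        exact fun h => finj 0 a (by omega) a.2 (by omega) h.symm
      · rw [← fv]
        exact finj a _ a.2 (by omega) (by have := a.2; omega)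

theorem iso_theta_of_threads (hG : G.Connected) {u v : V} (huv : u ≠ v)
    (hu : G.degree u = 3) (hv : G.degree v = 3) (hw : ∀ w, w ≠ u → w ≠ v → G.degree w = 2)
    {x y z : ℕ → V} {r s t : ℕ} (hx : IsThread G x r) (hy : IsThread G y s)
    (hz : IsThread G z t) (hx0 : x 0 = u) (hy0 : y 0 = u)
    (hz0 : z 0 = u) (hx1 : x r = v) (hy1 : y s = v) (hz1 : z t = v)
    (hxy : x 1 ≠ y 1) (hxz : x 1 ≠ z 1) (hyz : y 1 ≠ z 1) :
    ∃ r s t : ℕ, t ≤ s ∧ s ≤ r ∧ (s, t) ≠ (0, 0) ∧ Nonempty (G ≃g thetaGraph r s t) := by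
  obtain ⟨r, rfl⟩ : ∃ k, r = k + 1 := ⟨r - 1, by have := hx.pos; omega⟩
  obtain ⟨s, rfl⟩ : ∃ k, s = k + 1 := ⟨s - 1, by have := hy.pos; omega⟩
  obtain ⟨t, rfl⟩ : ∃ k, t = k + 1 := ⟨t - 1, by have := hz.pos; omega⟩
  have main := fun {x y z} {r s t} => @iso_theta_of_threads_sorted V _ _ G hG u v huv hu hv hw
    x y z r s t
  rcases le_total t s with h1 | h1 <;> rcases le_total s r with h2 | h2 <;>
    rcases le_total t r with h3 | h3
  · exact main hx hy hz h1 h2 hx0 hy0 hz0 hx1 hy1 hz1 hxy hxz hyz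
  · exact main hx hy hz h1 h2 hx0 hy0 hz0 hx1 hy1 hz1 hxy hxz hyz
  · exact main hy hx hz h3 h2 hy0 hx0 hz0 hy1 hx1 hz1 hxy.symm hyz hxz
  · exact main hy hz hx h3 h1 hy0 hz0 hx0 hy1 hz1 hx1 hyz hxy.symm hxz.symm
  · exact main hx hz hy h1 h3 hx0 hz0 hy0 hx1 hz1 hy1 hxz hxy hyz.symm
  · exact main hz hx hy h2 h3 hz0 hx0 hy0 hz1 hx1 hy1 hxz.symm hyz.symm hxy
  · exact main hz hy hx h2 h1 hz0 hy0 hx0 hz1 hy1 hx1 hyz.symm hxz.symm hxy.symm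
  · exact main hz hy hx h2 h1 hz0 hy0 hx0 hz1 hy1 hx1 hyz.symm hxz.symm hxy.symm

/-- Closed threads at `u` and at `v` together with a thread from `u` to `v` exhibit a dumbbell
graph. -/
theorem iso_dumbbell_of_threads_sorted (hG : G.Connected) {u v : V} (huv : u ≠ v)
    (hu : G.degree u = 3) (hv : G.degree v = 3) (hw : ∀ w, w ≠ u → w ≠ v → G.degree w = 2)
    {x y z : ℕ → V} {p k q : ℕ} (hx : IsThread G x p) (hy : IsThread G y (k + 1))
    (hz : IsThread G z q) (hqp : q ≤ p) (hx0 : x 0 = u) (hx1 : x p = u)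
    (hy0 : y 0 = u) (hy1 : y (k + 1) = v) (hz0 : z 0 = v) (hz1 : z q = v) :
    ∃ p k q : ℕ, 3 ≤ q ∧ q ≤ p ∧ Nonempty (G ≃g dumbbellGraph p k q) := by
  have hp : 3 ≤ p := hx.three_le (hx1.trans hx0.symm)
  have hq : 3 ≤ q := hz.three_le (hz1.trans hz0.symm)
  refine ⟨p, k, q, hq, hqp, ?_⟩
  have : Nonempty (Fin (p + q + k)) := ⟨⟨0, by omega⟩⟩
  -- The closed threads are indexed from their base points `u` and `v`, so the connecting path
  -- contributes only `y 1, …, y k`.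
  let f : ℕ → V := fun i =>
    if i < p then x i else if i < p + q then z (i - p) else y (i - (p + q) + 1)
  have fx : ∀ i, i < p → f i = x i := fun i hi => if_pos hi
  have fz : ∀ i, i < q → f (p + i) = z i := fun i hi => by
    simp only [f]; rw [if_neg (by omega), if_pos (by omega), Nat.add_sub_cancel_left]
  have fy : ∀ i, f (p + q + i) = y (i + 1) := fun i => by
    simp only [f]
    rw [if_neg (by omega), if_neg (by omega), Nat.add_sub_cancel_left]
  have f0 : f 0 = u := by rw [fx 0 (by omega), hx0]
  have fp : f p = v := by have := fz 0 (by omega); rwa [add_zero, hz0] at this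
  have pos : ∀ i, i < p + q + k → i < p ∨ (∃ j, j < q ∧ i = p + j) ∨
      (∃ j, j < k ∧ i = p + q + j) := by
    intro i hi
    by_cases h1 : i < p
    · exact Or.inl h1
    by_cases h2 : i < p + q
    · exact Or.inr (Or.inl ⟨i - p, by omega, by omega⟩)
    · exact Or.inr (Or.inr ⟨i - (p + q), by omega, by omega⟩)
  have zero_ne : ∀ {a b : ℕ → V} {m l j : ℕ}, IsThread G a m → IsThread G b l → 0 < j → j < l →
      a 0 ≠ b j := by
    intro a b m l j ha hb h0 hj he
    have := hb.inner j h0 hj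
    rw [← he, ha.start] at this
    omega
  have finj : ∀ i j, i < p + q + k → j < p + q + k → i < j → f i ≠ f j := by
    intro i j hi hj hij
    rcases pos i hi with h1 | ⟨a, ha, rfl⟩ | ⟨a, ha, rfl⟩ <;>
      rcases pos j hj with h2 | ⟨b, hb, rfl⟩ | ⟨b, hb, rfl⟩ <;> try omega
    · rw [fx _ h1, fx _ h2]
      exact fun h => by have := hx.inj h1 h2 h; omega
    · rw [fx _ h1, fz _ hb]
      rcases Nat.eq_zero_or_pos i with rfl | hi0 <;> rcases Nat.eq_zero_or_pos b with rfl | hb0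
      · rw [hx0, hz0]; exact huv
      · exact zero_ne hx hz hb0 hb
      · exact (zero_ne hz hx hi0 h1).symm
      · intro he
        rcases hx.meet hz hi0 h1 hb0 hb he with h | h
        · exact huv (hx0.symm.trans (h.2.1.trans hz0))
        · exact huv (hx0.symm.trans (h.2.2.1.trans hz1))
    · rw [fx _ h1, fy]
      rcases Nat.eq_zero_or_pos i with rfl | hi0
      · exact zero_ne hx hy (by omega) (by omega)
      · intro he
        rcases hx.meet hy hi0 h1 (by omega) (by omega) he with h | h
        · exact huv (hx1.symm.trans (h.2.2.2.trans hy1))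
        · exact huv (hx0.symm.trans (h.2.2.1.trans hy1))
    · rw [fz _ ha, fz _ hb]
      exact fun h => by have := hz.inj ha hb h; omega
    · rw [fz _ ha, fy]
      rcases Nat.eq_zero_or_pos a with rfl | hi0
      · exact zero_ne hz hy (by omega) (by omega)
      · intro he
        rcases hz.meet hy hi0 ha (by omega) (by omega) he with h | h
        · exact huv (hy0.symm.trans (h.2.1.symm.trans hz0))
        · exact huv (hy0.symm.trans (h.2.2.2.2.1.symm.trans hz1))
    · rw [fy, fy]
      exact fun h => by have := hy.inj (by omega) (by omega) h; omega
  have finj' : Function.Injective fun i : Fin (p + q + k) => f i := by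
    intro i j hij
    rcases lt_trichotomy (i : ℕ) j with h | h | h
    · exact absurd hij (finj i j i.2 j.2 h)
    · exact Fin.ext h
    · exact absurd hij.symm (finj j i j.2 i.2 h)
  have hrel : ∀ a b, a < p + q + k → dumbbellRel p k q a b → G.Adj (f a) (f b) := by
    rintro a b ha (⟨rfl, h⟩ | ⟨rfl, rfl⟩ | ⟨h1, rfl, h⟩ | ⟨rfl, rfl⟩ | ⟨h1, rfl, h⟩ | h)
    · rw [fx _ h, fx a (by omega)]
      exact hx.adj a (by omega)
    · have := hx.adj (p - 1) (by omega)
      rw [Nat.sub_add_cancel (by omega), hx1] at this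
      rw [f0, fx _ (by omega)]
      exact this.symm
    · obtain ⟨j, rfl⟩ : ∃ j, a = p + j := ⟨a - p, by omega⟩
      rw [add_assoc, fz _ (by omega), fz _ (by omega)]
      exact hz.adj j (by omega)
    · have := hz.adj (q - 1) (by omega)
      rw [Nat.sub_add_cancel (by omega), hz1] at this
      rw [fp, Nat.add_sub_assoc (by omega), fz _ (by omega)]
      exact this.symm
    · obtain ⟨j, rfl⟩ : ∃ j, a = p + q + j := ⟨a - (p + q), by omega⟩
      rw [add_assoc (p + q), fy, fy]
      exact hy.adj (j + 1) (by omega)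
    · split_ifs at h with hk
      · obtain ⟨rfl, rfl⟩ := h
        subst hk
        rw [f0, fp, ← hy0, ← hy1]
        exact hy.adj 0 (by omega)
      · rcases h with ⟨rfl, rfl⟩ | ⟨rfl, rfl⟩
        · have := fy 0
          rw [add_zero] at this
          rw [f0, this, ← hy0]
          exact hy.adj 0 (by omega)
        · rw [fp, Nat.add_sub_assoc (by omega), fy, Nat.sub_add_cancel (by omega), ← hy1]
          exact (hy.adj k (by omega)).symm
  refine nonempty_iso_of_injective hG (fun i => f i) finj' ?_ ?_
  · intro a b hab
    rw [dumbbell_adj] at hab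
    rcases hab.2 with h | h
    · exact hrel _ _ a.2 h
    · exact (hrel _ _ b.2 h).symm
  · intro a
    by_cases h0 : (a : ℕ) = 0
    · have e : f a = u := by rw [h0, f0]
      have hd : (dumbbellGraph p k q).degree a = 3 := by
        rw [show a = ⟨0, by omega⟩ from Fin.ext h0]
        exact dumbbell_degree_zero hq hp
      rw [e, hd, hu]
    by_cases h1 : (a : ℕ) = p
    · have e : f a = v := by rw [h1, fp]
      have hd : (dumbbellGraph p k q).degree a = 3 := by
        rw [show a = ⟨p, by omega⟩ from Fin.ext h1]
        exact dumbbell_degree_p hq hp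
      rw [e, hd, hv]
    · rw [dumbbell_degree_other hq hp a h0 h1]
      refine (hw _ ?_ ?_).le
      · rw [← f0]
        exact fun h => finj 0 a (by omega) a.2 (by omega) h.symm
      · rw [← fp]
        intro h
        rcases lt_or_gt_of_ne h1 with h2 | h2
        · exact finj a _ a.2 (by omega) h2 h
        · exact finj _ a (by omega) a.2 h2 h.symm

/-- A thread leaving `u` off a closed thread based at `u` ends at the other vertex of degree three. -/
theorem IsThread.last_of_closed {u v : V} (hu : G.degree u = 3)
    (hw : ∀ w, w ≠ u → w ≠ v → G.degree w = 2)
    {x y : ℕ → V} {m l : ℕ} (hx : IsThread G x m) (hx0 : x 0 = u) (hxm : x m = u)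
    (hy : IsThread G y l) (hy0 : y 0 = u) (h1 : y 1 ≠ x 1) (h2 : y 1 ≠ x (m - 1)) : y l = v := by
  by_contra hne
  have hyl : y l = u := by
    by_contra h
    have := hw _ h hne
    rw [hy.last] at this
    omega
  have hm : 3 ≤ m := hx.three_le (hxm.trans hx0.symm)
  have hl : 3 ≤ l := hy.three_le (hyl.trans hy0.symm)
  have ax1 : G.Adj u (x 1) := by have := hx.adj 0 (by omega); rwa [hx0] at this
  have axm : G.Adj u (x (m - 1)) := by
    have := (hx.adj (m - 1) (by omega)).symm
    rwa [Nat.sub_add_cancel (by omega), hxm] at this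
  have ay1 : G.Adj u (y 1) := by have := hy.adj 0 (by omega); rwa [hy0] at this
  have ayl : G.Adj u (y (l - 1)) := by
    have := (hy.adj (l - 1) (by omega)).symm
    rwa [Nat.sub_add_cancel (by omega), hyl] at this
  -- Two disjoint closed threads at `u` would give `u` four neighbours.
  have dis : ∀ i j, 0 < i → i < m → 0 < j → j < l → x i ≠ y j := by
    intro i j hi hi' hj hj' he
    rcases hx.meet hy hi hi' hj hj' he with h | h
    · exact h1 h.2.2.1.symm
    · exact h2 h.2.2.2.2.2.symm
  have hsub : ({x 1, x (m - 1), y 1, y (l - 1)} : Finset V) ⊆ G.neighborFinset u := by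
    intro w hw
    simp only [Finset.mem_insert, Finset.mem_singleton] at hw
    rcases hw with rfl | rfl | rfl | rfl <;> simpa
  have hcard := Finset.card_le_card hsub
  have nx : x 1 ≠ x (m - 1) := fun h => by have := hx.inj (by omega) (by omega) h; omega
  have ny : y 1 ≠ y (l - 1) := fun h => by have := hy.inj (by omega) (by omega) h; omega
  rw [SimpleGraph.card_neighborFinset_eq_degree, hu, Finset.card_insert_of_notMem,
    Finset.card_insert_of_notMem, Finset.card_pair ny] at hcard
  · omega
  · simp [dis (m - 1) 1 (by omega) (by omega) (by omega) (by omega),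
      dis (m - 1) (l - 1) (by omega) (by omega) (by omega) (by omega)]
  · simp [nx, dis 1 1 (by omega) (by omega) (by omega) (by omega),
      dis 1 (l - 1) (by omega) (by omega) (by omega) (by omega)]

theorem exists_three_neighbors {u : V} (hu : G.degree u = 3) :
    ∃ a b c, a ≠ b ∧ a ≠ c ∧ b ≠ c ∧ G.Adj u a ∧ G.Adj u b ∧ G.Adj u c := by
  rw [← SimpleGraph.card_neighborFinset_eq_degree, Finset.card_eq_three] at hu
  obtain ⟨a, b, c, hab, hac, hbc, h⟩ := hu
  have : ∀ w, w ∈ ({a, b, c} : Finset V) → G.Adj u w := fun w hw => by rw [← h] at hw; simpa using hw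
  exact ⟨a, b, c, hab, hac, hbc, this a (by simp), this b (by simp), this c (by simp)⟩

/-- If no thread based at `u` is closed, then the three threads leaving `u` all end at `v`. -/
theorem theta_or_closed (hG : G.Connected) {u v : V} (huv : u ≠ v)
    (hu : G.degree u = 3) (hv : G.degree v = 3) (hw : ∀ w, w ≠ u → w ≠ v → G.degree w = 2) :
    (∃ r s t : ℕ, t ≤ s ∧ s ≤ r ∧ (s, t) ≠ (0, 0) ∧ Nonempty (G ≃g thetaGraph r s t)) ∨
    ∃ x m, IsThread G x m ∧ x 0 = u ∧ x m = u := by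
  have hdeg : ∀ w, G.degree w = 2 ∨ G.degree w = 3 := fun w => by
    by_cases h1 : w = u
    · exact Or.inr (h1 ▸ hu)
    by_cases h2 : w = v
    · exact Or.inr (h2 ▸ hv)
    · exact Or.inl (hw w h1 h2)
  by_cases hc : ∃ x m, IsThread G x m ∧ x 0 = u ∧ x m = u
  · exact Or.inr hc
  left
  have hend : ∀ {x m}, IsThread G x m → x 0 = u → x m = v := by
    intro x m hx hx0
    by_contra h
    have := hw (x m) (fun h' => hc ⟨x, m, hx, hx0, h'⟩) h
    rw [hx.last] at this
    omega
  obtain ⟨a, b, c, hab, hac, hbc, ha, hb, hc'⟩ := exists_three_neighbors hu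
  obtain ⟨x, r, hx, hx0, hx1⟩ := exists_thread hdeg hu ha
  obtain ⟨y, s, hy, hy0, hy1⟩ := exists_thread hdeg hu hb
  obtain ⟨z, t, hz, hz0, hz1⟩ := exists_thread hdeg hu hc'
  exact iso_theta_of_threads hG huv hu hv hw hx hy hz hx0 hy0 hz0 (hend hx hx0) (hend hy hy0)
    (hend hz hz0) (by rwa [hx1, hy1]) (by rwa [hx1, hz1]) (by rwa [hy1, hz1])

/-- A connected graph with degrees `3, 3, 2, …, 2` is a dumbbell graph or a theta graph. -/
theorem IsBicyclicCore.classification (h : IsBicyclicCore G) :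
    (∃ p k q : ℕ, 3 ≤ q ∧ q ≤ p ∧ Nonempty (G ≃g dumbbellGraph p k q)) ∨
    (∃ r s t : ℕ, t ≤ s ∧ s ≤ r ∧ (s, t) ≠ (0, 0) ∧ Nonempty (G ≃g thetaGraph r s t)) := by
  obtain ⟨hG, u, v, huv, hu, hv, hw⟩ := h
  have hw' : ∀ w, w ≠ v → w ≠ u → G.degree w = 2 := fun w h1 h2 => hw w h2 h1
  rcases theta_or_closed hG huv hu hv hw with h | ⟨x, p, hx, hx0, hxp⟩
  · exact Or.inr h
  rcases theta_or_closed hG huv.symm hv hu hw' with h | ⟨z, q, hz, hz0, hzq⟩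
  · exact Or.inr h
  left
  have hdeg : ∀ w, G.degree w = 2 ∨ G.degree w = 3 := fun w => by
    by_cases h1 : w = u
    · exact Or.inr (h1 ▸ hu)
    by_cases h2 : w = v
    · exact Or.inr (h2 ▸ hv)
    · exact Or.inl (hw w h1 h2)
  -- The closed thread at `u` uses at most two of the three edges at `u`.
  have third : ∀ b c, ∃ a, G.Adj u a ∧ a ≠ b ∧ a ≠ c := by
    intro b c
    have : ({b, c} : Finset V).card < (G.neighborFinset u).card := by
      rw [SimpleGraph.card_neighborFinset_eq_degree, hu]
      exact lt_of_le_of_lt Finset.card_le_two (by omega)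
    obtain ⟨a, ha, hna⟩ := Finset.exists_mem_notMem_of_card_lt_card this
    simp only [Finset.mem_insert, Finset.mem_singleton, not_or] at hna
    exact ⟨a, by simpa using ha, hna⟩
  obtain ⟨a, ha, ha1, ha2⟩ := third (x 1) (x (p - 1))
  obtain ⟨y, l, hy, hy0, hy1⟩ := exists_thread hdeg hu ha
  have hyl : y l = v := hx.last_of_closed hu hw hx0 hxp hy hy0 (by rwa [hy1]) (by rwa [hy1])
  obtain ⟨k, rfl⟩ : ∃ k, l = k + 1 := ⟨l - 1, by have := hy.pos; omega⟩
  rcases le_total q p with hqp | hqp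
  · exact iso_dumbbell_of_threads_sorted hG huv hu hv hw hx hy hz hqp hx0 hxp hy0 hyl hz0 hzq
  · exact iso_dumbbell_of_threads_sorted hG huv.symm hv hu hw' hz hy.reverse hx hqp hz0 hzq
      (by simpa using hyl) (by simpa using hy0) hx0 hxp

end Classification

/-- If `G` is a dumbbell graph or a theta graph and `G'` is L-cospectral with `G`,
then `G'` is isomorphic to a dumbbell graph or to a theta graph. -/
theorem lapCospectral_with_dumbbell_or_theta {V : Type*} [Fintype V] [DecidableEq V]
    (G' : SimpleGraph V)
    (h : (∃ p k q : ℕ, 3 ≤ q ∧ q ≤ p ∧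
            (G'.lapMatrix ℚ).charpoly = ((dumbbellGraph p k q).lapMatrix ℚ).charpoly) ∨
         (∃ r s t : ℕ, t ≤ s ∧ s ≤ r ∧ (s, t) ≠ (0, 0) ∧
            (G'.lapMatrix ℚ).charpoly = ((thetaGraph r s t).lapMatrix ℚ).charpoly)) :
    (∃ p k q : ℕ, 3 ≤ q ∧ q ≤ p ∧ Nonempty (G' ≃g dumbbellGraph p k q)) ∨
    (∃ r s t : ℕ, t ≤ s ∧ s ≤ r ∧ (s, t) ≠ (0, 0) ∧
      Nonempty (G' ≃g thetaGraph r s t)) := by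
  apply IsBicyclicCore.classification
  rcases h with ⟨p, k, q, hq, hqp, h⟩ | ⟨r, s, t, hts, hsr, hst, h⟩
  · exact (dumbbell_isBicyclicCore hq (hq.trans hqp)).of_charpoly_eq h
  · have hs : 1 ≤ s := by
      by_contra hs
      exact hst (by rw [Prod.mk.injEq]; omega)
    exact (theta_isBicyclicCore hts hsr hs).of_charpoly_eq h
end

section
/- For all integers q ≥ 3 and k ≥ 1, the following identity of polynomials in x holds: φ(L_{q,k};x) = ((x−3)·φ(U_{q−1};x) − 2·φ(U_{q−2};x) − 2·(−1)^q)·φ(U_k;x) − φ(U_{q−1};x)·φ(U_{k−1};x). -/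
/-!
Both characteristic polynomials are determinants of principal truncations of infinite arrays
`ℕ → ℕ → ℚ[X]`, for which deleting leading rows and columns is a shift of indices.

A determinant whose vertex `0` is joined only to vertex `1` satisfies the three-term recurrence
`ndet_peel`. Along the pendant path it shows that `φ(U_k)` and `φ(L_{q,k})`, as sequences in `k`,
obey the same recurrence `a (k + 2) = (X - 2) a (k + 1) - a k`, whence
`φ(L_{q,k}) = φ(L_{q,0}) φ(U_k) - φ(U_{q-1}) φ(U_{k-1})`. The cycle factor `φ(L_{q,0})` is computed in
`ndet_cycleArr` by expanding along the row and then the column of `w_1`: of the five minors that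
survive, one is `φ(U_{q-1})`, two are `φ(U_{q-2})` up to sign, and two are triangular with unit diagonal
(the two orientations of the cycle), giving the term `-2 (-1)^q`.
-/


open Polynomial Matrix SimpleGraph
open scoped Classical

/-- The determinant of the leading `n × n` block of an infinite array. -/
noncomputable def ndet (f : ℕ → ℕ → ℚ[X]) (n : ℕ) : ℚ[X] :=
  (Matrix.of fun i j : Fin n => f i j).det

/-- The infinite tridiagonal array whose leading `n × n` block is `X I - U_n`. -/
noncomputable def pathArr (a b : ℕ) : ℚ[X] :=
  if a = b then X - 2 else if a + 1 = b ∨ b + 1 = a then 1 else 0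

/-- An infinite array whose leading `(q + k) × (q + k)` block is `X I - L_{q,k}`. -/
noncomputable def dumbbellArr (q k a b : ℕ) : ℚ[X] :=
  if a = b then (if a = k then X - 3 else X - 2)
  else if a + 1 = b ∨ b + 1 = a ∨ (a = k ∧ b = k + q - 1) ∨ (a = k + q - 1 ∧ b = k) then 1 else 0

lemma charpoly_Umatrix (n : ℕ) : (Umatrix ℚ n).charpoly = ndet pathArr n := by
  unfold Matrix.charpoly ndet
  congr 1
  ext1 i j
  by_cases h : i = j
  · subst h
    simp [Umatrix, pathArr, map_ofNat C 2]
  · have h' : (i : ℕ) ≠ j := fun e => h (Fin.ext e)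
    simp only [charmatrix_apply_ne _ _ _ h, Umatrix, pathArr, Matrix.of_apply, if_neg h']
    split_ifs <;> simp

lemma charpoly_dumbbell_eq_ndet (q k : ℕ) :
    (dumbbellMinor ℚ q k).charpoly = ndet (dumbbellArr q k) (q + k) := by
  unfold Matrix.charpoly ndet
  congr 1
  ext1 i j
  by_cases h : i = j
  · subst h
    simp only [charmatrix_apply_eq, dumbbellMinor, dumbbellArr, Matrix.of_apply, if_true]
    split_ifs
    · rw [map_ofNat C 3]
    · rw [map_ofNat C 2]
  · have h' : (i : ℕ) ≠ j := fun e => h (Fin.ext e)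
    simp only [charmatrix_apply_ne _ _ _ h, dumbbellMinor, dumbbellArr, Matrix.of_apply, if_neg h']
    split_ifs <;> simp

/-- Expansion of a determinant at a vertex `0` whose only neighbour is `1`. -/
lemma ndet_peel (f : ℕ → ℕ → ℚ[X]) (n : ℕ) (hr : ∀ j < n, f 0 (j + 2) = 0)
    (hc : ∀ j < n, f (j + 2) 0 = 0) :
    ndet f (n + 2) = f 0 0 * ndet (fun a b => f (a + 1) (b + 1)) (n + 1)
      - f 0 1 * f 1 0 * ndet (fun a b => f (a + 2) (b + 2)) n := by
  have hrow : ∀ j : Fin n, f 0 ((j : ℕ) + 1 + 1) = 0 := fun j => hr j j.2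
  have hcol : ∀ j : Fin n, f ((j : ℕ) + 1 + 1) 0 = 0 := fun j => hc j j.2
  unfold ndet
  rw [Matrix.det_succ_row_zero, Fin.sum_univ_succ, Fin.sum_univ_succ]
  rw [Matrix.det_succ_column_zero
    ((Matrix.of fun i j : Fin (n + 2) => f i j).submatrix Fin.succ (Fin.succ 0).succAbove),
    Fin.sum_univ_succ]
  simp [hrow, hcol, Matrix.submatrix]
  ring

lemma ndet_pathArr_add_two (n : ℕ) :
    ndet pathArr (n + 2) = (X - 2) * ndet pathArr (n + 1) - ndet pathArr n := by
  rw [ndet_peel _ _ (by intros; simp [pathArr]) (by intros; simp [pathArr])]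
  have h00 : pathArr 0 0 = X - 2 := by simp [pathArr]
  have h01 : pathArr 0 1 = 1 := by simp [pathArr]
  have h10 : pathArr 1 0 = 1 := by simp [pathArr]
  have h (a b : ℕ) : pathArr (a + 1) (b + 1) = pathArr a b := by simp [pathArr]
  simp only [h00, h01, h10, h, one_mul]

lemma dumbbellArr_shift (q k a b : ℕ) (hq : 1 ≤ q) :
    dumbbellArr q (k + 1) (a + 1) (b + 1) = dumbbellArr q k a b := by
  have h : k + 1 + q - 1 = k + q - 1 + 1 := by omega
  simp [dumbbellArr, h]

lemma dumbbellArr_shift_zero (q a b : ℕ) :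
    dumbbellArr q 0 (a + 1) (b + 1) = pathArr a b := by
  simp [dumbbellArr, pathArr]

lemma ndet_dumbbellArr_add_two (q k : ℕ) (hq : 3 ≤ q) :
    ndet (dumbbellArr q (k + 2)) (q + (k + 2)) =
      (X - 2) * ndet (dumbbellArr q (k + 1)) (q + (k + 1)) - ndet (dumbbellArr q k) (q + k) := by
  have := ndet_peel (dumbbellArr q (k + 2)) (q + k)
    (by intros; simp only [dumbbellArr]; rw [if_neg (by omega), if_neg (by omega)])
    (by intros; simp only [dumbbellArr]; rw [if_neg (by omega), if_neg (by omega)])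
  have h00 : dumbbellArr q (k + 2) 0 0 = X - 2 := by simp [dumbbellArr]
  have h01 : dumbbellArr q (k + 2) 0 1 = 1 := by simp [dumbbellArr]
  have h10 : dumbbellArr q (k + 2) 1 0 = 1 := by simp [dumbbellArr]
  rw [← add_assoc, ← add_assoc, this, h00, h01, h10]
  simp only [dumbbellArr_shift _ _ _ _ (show 1 ≤ q by omega), one_mul]

lemma ndet_dumbbellArr_one (m : ℕ) :
    ndet (dumbbellArr (m + 3) 1) (m + 3 + 1) =
      (X - 2) * ndet (dumbbellArr (m + 3) 0) (m + 3) - ndet pathArr (m + 2) := by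
  have := ndet_peel (dumbbellArr (m + 3) 1) (m + 2) (by intros; simp [dumbbellArr])
    (by intros; simp [dumbbellArr])
  have h00 : dumbbellArr (m + 3) 1 0 0 = X - 2 := by simp [dumbbellArr]
  have h01 : dumbbellArr (m + 3) 1 0 1 = 1 := by simp [dumbbellArr]
  have h10 : dumbbellArr (m + 3) 1 1 0 = 1 := by simp [dumbbellArr]
  rw [this, h00, h01, h10]
  simp only [dumbbellArr_shift (m + 3) 0 _ _ (by omega), dumbbellArr_shift_zero, one_mul]

/-- Deleting the first row and last column of `X I - U_{n+1}` leaves a unit upper triangular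
matrix. -/
lemma ndet_pathArr_upper (n : ℕ) : ndet (fun a b => pathArr (a + 1) b) n = 1 := by
  unfold ndet
  rw [Matrix.det_of_isUpperTriangular]
  · simp [pathArr]
  · intro i j h
    have : (j : ℕ) < i := h
    simp only [Matrix.of_apply, pathArr]
    rw [if_neg (by omega), if_neg (by omega)]

/-- Deleting the last row and first column of `X I - U_{n+1}` leaves a unit lower triangular
matrix. -/
lemma ndet_pathArr_lower (n : ℕ) : ndet (fun a b => pathArr a (b + 1)) n = 1 := by
  unfold ndet
  rw [Matrix.det_of_isLowerTriangular]
  · simp [pathArr]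
  · intro i j h
    have : (i : ℕ) < j := h
    simp only [Matrix.of_apply, pathArr]
    rw [if_neg (by omega), if_neg (by omega)]

/-- Expansion at a vertex `0` whose only neighbours are `1` and the last vertex. -/
lemma ndet_cycle_expand (f : ℕ → ℕ → ℚ[X]) (m : ℕ) (hr : ∀ j < m, f 0 (j + 2) = 0)
    (hc : ∀ j < m, f (j + 2) 0 = 0) :
    ndet f (m + 3) = f 0 0 * ndet (fun a b => f (a + 1) (b + 1)) (m + 2)
      - f 0 1 * (f 1 0 * ndet (fun a b => f (a + 2) (b + 2)) (m + 1)
        + (-1) ^ (m + 1) * f (m + 2) 0 * ndet (fun a b => f (a + 1) (b + 2)) (m + 1))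
      + (-1) ^ m * f 0 (m + 2) * (f 1 0 * ndet (fun a b => f (a + 2) (b + 1)) (m + 1)
        + (-1) ^ (m + 1) * f (m + 2) 0 * ndet (fun a b => f (a + 1) (b + 1)) (m + 1)) := by
  have hrow : ∀ j : Fin m, f 0 ((j : ℕ) + 1 + 1) = 0 := fun j => hr j j.2
  have hcol : ∀ j : Fin m, f ((j : ℕ) + 1 + 1) 0 = 0 := fun j => hc j j.2
  unfold ndet
  rw [Matrix.det_succ_row_zero, Fin.sum_univ_succ, Fin.sum_univ_succ, Fin.sum_univ_castSucc]
  rw [Matrix.det_succ_column_zero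
    ((Matrix.of fun i j : Fin (m + 3) => f i j).submatrix Fin.succ (Fin.succ 0).succAbove),
    Fin.sum_univ_succ, Fin.sum_univ_castSucc]
  rw [Matrix.det_succ_column_zero
    ((Matrix.of fun i j : Fin (m + 3) => f i j).submatrix Fin.succ
      (Fin.last m).succ.succ.succAbove),
    Fin.sum_univ_succ, Fin.sum_univ_castSucc]
  simp [hrow, hcol, Matrix.submatrix]
  ring

/-- The cycle factor `φ(L_{q,0})`, with `q = m + 3`. -/
lemma ndet_cycleArr (m : ℕ) :
    ndet (dumbbellArr (m + 3) 0) (m + 3) =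
      (X - 3) * ndet pathArr (m + 2) - 2 * ndet pathArr (m + 1) - 2 * (-1) ^ (m + 3) := by
  rw [ndet_cycle_expand]
  · have h1 := ndet_pathArr_upper (m + 1)
    have h2 := ndet_pathArr_lower (m + 1)
    have h3 (a b : ℕ) : pathArr (a + 1) (b + 1) = pathArr a b := by simp [pathArr]
    have h4 (a b : ℕ) : dumbbellArr (m + 3) 0 (a + 2) (b + 1) = pathArr (a + 1) b :=
      dumbbellArr_shift_zero _ _ _
    have h5 (a b : ℕ) : dumbbellArr (m + 3) 0 (a + 1) (b + 2) = pathArr a (b + 1) :=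
      dumbbellArr_shift_zero _ _ _
    have e : ((-1 : ℚ[X]) ^ m) * (-1) ^ m = 1 := by rw [← mul_pow]; simp
    simp only [h4, h5, dumbbellArr_shift_zero, h3, h1, h2]
    simp [dumbbellArr]
    linear_combination (-ndet pathArr (m + 1)) * e
  · intro j hj
    simp only [dumbbellArr]
    rw [if_neg (by omega), if_neg (by omega)]
  · intro j hj
    simp only [dumbbellArr]
    rw [if_neg (by omega), if_neg (by omega)]

/-- Splitting off the pendant path: both sides satisfy the same second-order recurrence. -/
lemma ndet_dumbbellArr_succ (m k : ℕ) :
    ndet (dumbbellArr (m + 3) (k + 1)) (m + 3 + (k + 1)) =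
      ndet (dumbbellArr (m + 3) 0) (m + 3) * ndet pathArr (k + 1)
        - ndet pathArr (m + 2) * ndet pathArr k := by
  have p0 : ndet pathArr 0 = 1 := by simp [ndet]
  have p1 : ndet pathArr 1 = X - 2 := by simp [ndet, pathArr]
  have p2 : ndet pathArr 2 = (X - 2) * (X - 2) - 1 := by
    rw [ndet_pathArr_add_two, zero_add, p0, p1]
  induction k using Nat.twoStepInduction with
  | zero =>
    rw [ndet_dumbbellArr_one]
    simp only [zero_add, p0, p1]
    ring
  | one =>
    have := ndet_dumbbellArr_add_two (m + 3) 0 (by omega)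
    rw [this, zero_add, ndet_dumbbellArr_one]
    simp only [Nat.reduceAdd, add_zero, p1, p2]
    ring
  | more k ih0 ih1 =>
    have := ndet_dumbbellArr_add_two (m + 3) (k + 1) (by omega)
    rw [this, ih0, ih1, ndet_pathArr_add_two (k + 1), ndet_pathArr_add_two k]
    ring

/-- `φ(L_{q,k}) = ((x−3)φ(U_{q−1}) − 2φ(U_{q−2}) − 2(−1)^q)·φ(U_k) − φ(U_{q−1})·φ(U_{k−1})`. -/
theorem charpoly_dumbbellMinor (q k : ℕ) (hq : 3 ≤ q) (hk : 1 ≤ k) :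
    (dumbbellMinor ℚ q k).charpoly =
      ((X - 3) * (Umatrix ℚ (q - 1)).charpoly - 2 * (Umatrix ℚ (q - 2)).charpoly
          - 2 * (-1 : ℚ[X]) ^ q) * (Umatrix ℚ k).charpoly
        - (Umatrix ℚ (q - 1)).charpoly * (Umatrix ℚ (k - 1)).charpoly := by
  obtain ⟨m, rfl⟩ := Nat.exists_eq_add_of_le' hq
  obtain ⟨k, rfl⟩ := Nat.exists_eq_add_of_le' hk
  simp only [charpoly_Umatrix, charpoly_dumbbell_eq_ndet]
  rw [ndet_dumbbellArr_succ, ndet_cycleArr]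
  rfl
end
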